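/- arXiv:1208.3161 — 3 statements merged into one kernel-verified Lean document; each statement's English description precedes it below -/
import Mathlib

section
/- Let T be a normal, steep rank-one transformation. Then T is not rationally weakly mixing: there is no measurable set F with 0 < μ(F) < ∞ such that for all measurable A, B ⊆ F, (1/a_n(F)) ∑_{k=0}^{n−1} |μ(A ∩ T^k B) − μ(A)μ(B) u_k(F)| → 0 as n → ∞. -/
open MeasureTheory Filter Set Pointwise

/-- A rank-one cutting-and-stacking transformation of a subset `X ⊆ ℝ` (with Lebesgue
measure), given by columns `C n` consisting of `h n` levels (open intervals) of width `w n`,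
with `pos n j` the left endpoint of the level of height `j` in column `C n`; column `C (n+1)`
is obtained from `C n` by cutting into `r n ≥ 2` subcolumns of equal width, adding `s n k`
spacers above the `k`-th subcolumn, and stacking. -/
structure RankOne where
  X : Set ℝ
  T : ℝ ≃ᵐ ℝ
  r : ℕ → ℕ
  s : ℕ → ℕ → ℕ
  h : ℕ → ℕ
  w : ℕ → ℝ
  pos : ℕ → ℕ → ℝ
  hr : ∀ n, 2 ≤ r n
  h0 : h 0 = 1
  w0 : w 0 = 1
  pos0 : pos 0 0 = 0
  hrec : ∀ n, h (n + 1) = ∑ k ∈ Finset.range (r n), (h n + s n k)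
  wrec : ∀ n, w (n + 1) = w n / (r n : ℝ)
  hX : X = ⋃ n, ⋃ j < h n, Set.Ioo (pos n j) (pos n j + w n)
  disj : ∀ n, ∀ j < h n, ∀ j' < h n, j ≠ j' →
    Disjoint (Set.Ioo (pos n j) (pos n j + w n)) (Set.Ioo (pos n j') (pos n j' + w n))
  stack : ∀ n, ∀ j < h n, ∀ k < r n,
    pos (n + 1) ((∑ i ∈ Finset.range k, (h n + s n i)) + j) = pos n j + (k : ℝ) * w (n + 1)
  Tmap : ∀ n j, j + 1 < h n → ∀ x ∈ Set.Ioo (pos n j) (pos n j + w n),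
    T x = x + (pos n (j + 1) - pos n j)
  Tbij : Set.BijOn (⇑T) X X
  Tpres : MeasurePreserving (⇑T) (volume.restrict X) (volume.restrict X)

namespace RankOne

/-- The level of height `j` in column `C n`. -/
def lvl (S : RankOne) (n j : ℕ) : Set ℝ := Set.Ioo (S.pos n j) (S.pos n j + S.w n)

/-- The measure on the space: Lebesgue measure restricted to `X`. -/
noncomputable def μ (S : RankOne) : Measure ℝ := volume.restrict S.X

/-- The intrinsic weight sequence `u n F = μ(F ∩ TⁿF) / μ(F)²`. -/
noncomputable def u (S : RankOne) (F : Set ℝ) (n : ℕ) : ℝ :=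
  (S.μ (F ∩ (⇑S.T)^[n] '' F)).toReal / (S.μ F).toReal ^ 2

/-- `a n F = ∑_{k<n} u k F`. -/
noncomputable def a (S : RankOne) (F : Set ℝ) (n : ℕ) : ℝ :=
  ∑ k ∈ Finset.range n, S.u F k

/-- `T` is normal if spacers are added above the rightmost subcolumn infinitely often. -/
def Normal (S : RankOne) : Prop := ∀ m, ∃ n, m ≤ n ∧ 0 < S.s n (S.r n - 1)

/-- `T` grows exponentially: `2 s_{n, r_n - 1} ≥ h_{n+1}` for every `n`. -/
def ExpGrowing (S : RankOne) : Prop := ∀ n, S.h (n + 1) ≤ 2 * S.s n (S.r n - 1)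

/-- `T` has a bounded number of cuts: `sup r_n < ∞`. -/
def BoundedCuts (S : RankOne) : Prop := ∃ c, ∀ n, S.r n ≤ c

/-- `H n = {0} ∪ {∑_{k≤i} (h n + s n k) : 0 ≤ i < r n - 1}`. -/
def Hset (S : RankOne) (n : ℕ) : Finset ℕ :=
  insert 0 ((Finset.range (S.r n - 1)).image fun i => ∑ k ∈ Finset.range (i + 1), (S.h n + S.s n k))

/-- The set of heights in column `C N` of the descendants of the level of height `p`
in column `C j`: `D(J, N) = p + H j ⊕ H (j+1) ⊕ ⋯ ⊕ H (N-1)`. -/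
def desc (S : RankOne) (j p : ℕ) : ℕ → Finset ℕ
  | 0 => {p}
  | N + 1 => if N < j then {p} else desc S j p N + S.Hset N

/-- `M m`: the maximal height of a descendant of the unit interval `I` in column `C m`. -/
def M (S : RankOne) (m : ℕ) : ℕ := (S.desc 0 0 m).sup id

/-- The ergodic sum `S_n(1_F)(x) = ∑_{k<n} 1_F(T^k x)`. -/
noncomputable def birkhoff (S : RankOne) (F : Set ℝ) (n : ℕ) (x : ℝ) : ℝ :=
  ∑ k ∈ Finset.range n, Set.indicator F (fun _ => (1 : ℝ)) ((⇑S.T)^[k] x)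

/-- `T` is rationally weakly mixing on `F`. -/
def RWMOn (S : RankOne) (F : Set ℝ) : Prop :=
  MeasurableSet F ∧ 0 < S.μ F ∧ S.μ F ≠ ⊤ ∧
  ∀ A B : Set ℝ, MeasurableSet A → A ⊆ F → MeasurableSet B → B ⊆ F →
    Tendsto (fun n => (S.a F n)⁻¹ *
      ∑ k ∈ Finset.range n,
        |(S.μ (A ∩ (⇑S.T)^[k] '' B)).toReal - (S.μ A).toReal * (S.μ B).toReal * S.u F k|)
      atTop (nhds 0)

/-- `T` is rationally weakly mixing. -/
def RWM (S : RankOne) : Prop := ∃ F, S.RWMOn F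

/-- `T` is rationally ergodic: some set `F` of positive finite measure satisfies a
Renyi inequality. -/
def RatErgodic (S : RankOne) : Prop :=
  ∃ (F : Set ℝ) (c : ℝ), MeasurableSet F ∧ 0 < S.μ F ∧ S.μ F ≠ ⊤ ∧
    ∀ n, ∫ x in F, (S.birkhoff F n x) ^ 2 ∂S.μ ≤ c * (∫ x in F, S.birkhoff F n x ∂S.μ) ^ 2

/-- `T` is spectrally weakly mixing: every bounded measurable eigenfunction is a.e. constant. -/
def SpecWM (S : RankOne) : Prop :=
  ∀ (f : ℝ → ℂ) (z : ℂ), Measurable f → (∃ C, ∀ᵐ x ∂S.μ, ‖f x‖ ≤ C) →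
    (∀ᵐ x ∂S.μ, f (S.T x) = z * f x) → ∃ c : ℂ, ∀ᵐ x ∂S.μ, f x = c

/-- `T` is zero-type: `μ(A ∩ TⁿA) → 0` for all `A` of finite measure. -/
def ZeroType (S : RankOne) : Prop :=
  ∀ A : Set ℝ, MeasurableSet A → S.μ A ≠ ⊤ →
    Tendsto (fun n => S.μ (A ∩ (⇑S.T)^[n] '' A)) atTop (nhds 0)

/-- The `i`-th nonzero element of `H n` (for `i < r n - 1`): `e n i = ∑_{k ≤ i} (h n + s n k)`. -/
def e (S : RankOne) (n i : ℕ) : ℕ := ∑ k ∈ Finset.range (i + 1), (S.h n + S.s n k)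

/-- `T` is steep: listing the nonzero elements of `H 0`, then `H 1`, etc., as `t 1, t 2, …`,
each successive element is at least `4` times the previous one. -/
def Steep (S : RankOne) : Prop :=
  (∀ n i, i + 2 < S.r n → 4 * S.e n i ≤ S.e n (i + 1)) ∧
  (∀ n, 4 * S.e n (S.r n - 2) ≤ S.e (n + 1) 0)

/-- `T` is almost steep. -/
def AlmostSteep (S : RankOne) : Prop :=
  ∀ n, 3 ≤ S.r n ∧ S.s n 0 = 0 ∧ S.s n 1 = 1 ∧
    ∀ i, 2 ≤ i → i ≤ S.r n - 1 →
      4 * (∑ k ∈ Finset.range i, (S.h n + S.s n k)) ≤ ∑ k ∈ Finset.range (i + 1), (S.h n + S.s n k)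

/-- `A` is a finite union of levels of `T`. -/
def FinUnionLevels (S : RankOne) (A : Set ℝ) : Prop :=
  ∃ q : Finset (ℕ × ℕ), (∀ v ∈ q, v.2 < S.h v.1) ∧ A = ⋃ v ∈ q, S.lvl v.1 v.2

end RankOne


namespace RankOne

/-- Offset of the `k`-th subcolumn. -/
def sg (S : RankOne) (n k : ℕ) : ℕ := ∑ i ∈ Finset.range k, (S.h n + S.s n i)

/-- Cut points. -/
def Bd (S : RankOne) : Set ℝ :=
  Set.range fun v : ℕ × ℕ × ℕ => S.pos v.1 v.2.1 + (v.2.2 : ℝ) * S.w (v.1 + 1)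

lemma sg_zero (S : RankOne) (n : ℕ) : S.sg n 0 = 0 := by simp [sg]

lemma sg_succ (S : RankOne) (n k : ℕ) : S.sg n (k + 1) = S.sg n k + (S.h n + S.s n k) := by
  simp [sg, Finset.sum_range_succ]

lemma sg_mono (S : RankOne) (n : ℕ) : Monotone (S.sg n) :=
  monotone_nat_of_le_succ fun k => by rw [sg_succ]; omega

lemma h_eq (S : RankOne) (n : ℕ) : S.h (n + 1) = S.sg n (S.r n) := S.hrec n

lemma h_pos (S : RankOne) (n : ℕ) : 0 < S.h n := by
  induction n with
  | zero => rw [S.h0]; norm_num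
  | succ n ih =>
    rw [h_eq]
    have h1 := S.sg_mono n (show 1 ≤ S.r n by have := S.hr n; omega)
    have h2 := S.sg_succ n 0
    simp only [zero_add] at h2
    omega

lemma sg_lt (S : RankOne) {n j k : ℕ} (hj : j < S.h n) (hk : k < S.r n) :
    S.sg n k + j < S.h (n + 1) := by
  rw [h_eq]
  have h1 := S.sg_mono n (show k + 1 ≤ S.r n by omega)
  rw [sg_succ] at h1
  omega

lemma w_pos (S : RankOne) (n : ℕ) : 0 < S.w n := by
  induction n with
  | zero => rw [S.w0]; norm_num
  | succ n ih =>
    rw [S.wrec]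
    have := S.hr n
    have : (0 : ℝ) < S.r n := by exact_mod_cast (by omega : 0 < S.r n)
    positivity

lemma w_le (S : RankOne) (n : ℕ) : S.w n ≤ (1 / 2 : ℝ) ^ n := by
  induction n with
  | zero => rw [S.w0]; norm_num
  | succ n ih =>
    rw [S.wrec, pow_succ]
    have h2 : (2 : ℝ) ≤ S.r n := by exact_mod_cast S.hr n
    have := S.w_pos n
    rw [div_le_iff₀ (by linarith)]
    nlinarith [pow_pos (show (0 : ℝ) < 1 / 2 by norm_num) n]

lemma w_tendsto (S : RankOne) : Tendsto S.w atTop (nhds 0) :=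
  squeeze_zero (fun n => (S.w_pos n).le) S.w_le
    (tendsto_pow_atTop_nhds_zero_of_lt_one (by norm_num) (by norm_num))

lemma lvl_cover (S : RankOne) {n j : ℕ} (hj : j < S.h n) {x : ℝ} (hx : x ∈ S.lvl n j)
    (hb : x ∉ S.Bd) : ∃ k < S.r n, x ∈ S.lvl (n + 1) (S.sg n k + j) := by
  have hw := S.w_pos (n + 1)
  have hr0 : (0 : ℝ) < S.r n := by
    have := S.hr n
    exact_mod_cast (by omega : 0 < S.r n)
  have hwr : S.w n = S.r n * S.w (n + 1) := by rw [S.wrec]; field_simp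
  obtain ⟨h1, h2⟩ := hx
  set t := (x - S.pos n j) / S.w (n + 1) with ht
  have hxt : x = S.pos n j + t * S.w (n + 1) := by rw [ht]; field_simp; ring
  have ht0 : 0 ≤ t := by rw [ht]; apply div_nonneg <;> linarith
  have htr : t < S.r n := by rw [ht, div_lt_iff₀ hw]; linarith
  have hf1 := Nat.floor_le ht0
  have hf2 := Nat.lt_floor_add_one t
  have hk : ⌊t⌋₊ < S.r n := by exact_mod_cast lt_of_le_of_lt hf1 htr
  have hne : (⌊t⌋₊ : ℝ) ≠ t := by
    intro h
    apply hb
    exact ⟨(n, j, ⌊t⌋₊), by simp only [h]; exact hxt.symm⟩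
  have hlt := lt_of_le_of_ne hf1 hne
  refine ⟨⌊t⌋₊, hk, ?_⟩
  have hst := S.stack n j hj _ hk
  change S.pos (n + 1) (S.sg n ⌊t⌋₊ + j) = _ at hst
  simp only [lvl, hst, Set.mem_Ioo]
  constructor
  · rw [hxt]
    nlinarith
  · rw [hxt]
    nlinarith

lemma lvl_inj (S : RankOne) {n i j : ℕ} (hi : i < S.h n) (hj : j < S.h n) {x : ℝ}
    (hx : x ∈ S.lvl n i) (hy : x ∈ S.lvl n j) : i = j := by
  by_contra h
  exact Set.disjoint_left.1 (S.disj n i hi j hj h) hx hy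

lemma iter_lvl (S : RankOne) {n d : ℕ} (k : ℕ) (hd : d + k < S.h n) {x : ℝ}
    (hx : x ∈ S.lvl n d) : (⇑S.T)^[k] x ∈ S.lvl n (d + k) := by
  induction k with
  | zero => simpa using hx
  | succ k ih =>
    have h1 := ih (by omega)
    rw [Function.iterate_succ_apply', S.Tmap n (d + k) (by omega) _ h1]
    simp only [lvl, Set.mem_Ioo, ← add_assoc] at h1 ⊢
    constructor <;> linarith [h1.1, h1.2]

/-- `Dsc n j m d`: level `d` of column `n + m` is a descendant of level `j` of column `n`. -/
def Dsc (S : RankOne) (n j : ℕ) : ℕ → ℕ → Prop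
  | 0, d => d = j
  | m + 1, d => ∃ d', Dsc S n j m d' ∧ ∃ k < S.r (n + m), d = S.sg (n + m) k + d'

lemma exists_dsc (S : RankOne) {n j : ℕ} (hj : j < S.h n) {x : ℝ} (hx : x ∈ S.lvl n j)
    (hb : x ∉ S.Bd) (m : ℕ) :
    ∃ d, S.Dsc n j m d ∧ d < S.h (n + m) ∧ x ∈ S.lvl (n + m) d := by
  induction m with
  | zero => exact ⟨j, rfl, hj, hx⟩
  | succ m ih =>
    obtain ⟨d, h1, h2, h3⟩ := ih
    obtain ⟨k, hk, hk2⟩ := S.lvl_cover h2 h3 hb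
    exact ⟨S.sg (n + m) k + d, ⟨d, h1, k, hk, rfl⟩, S.sg_lt h2 hk, hk2⟩

lemma sg_gap (S : RankOne) (hs : S.Steep) {n u v : ℕ} (huv : u < v) (hv : v < S.r n) :
    4 * S.sg n u ≤ S.sg n v := by
  rcases Nat.eq_zero_or_pos u with rfl | hu
  · simp [sg_zero]
  · have h1 := hs.1 n (u - 1) (by omega)
    have e1 : S.e n (u - 1) = S.sg n u := by
      unfold e sg; rw [Nat.sub_add_cancel hu]
    have e2 : S.e n (u - 1 + 1) = S.sg n (u + 1) := by
      unfold e sg; rw [Nat.sub_add_cancel hu]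
    rw [e1, e2] at h1
    exact h1.trans (S.sg_mono n huv)

lemma sg_gap_next (S : RankOne) (hs : S.Steep) (n : ℕ) :
    4 * S.sg n (S.r n - 1) ≤ S.sg (n + 1) 1 := by
  have h1 := hs.2 n
  have := S.hr n
  have e1 : S.e n (S.r n - 2) = S.sg n (S.r n - 1) := by
    unfold e sg; rw [show S.r n - 2 + 1 = S.r n - 1 by omega]
  rw [e1] at h1
  exact h1

lemma sg_one_pos (S : RankOne) (n : ℕ) : 0 < S.sg n 1 := by
  have h2 := S.sg_succ n 0
  have := S.h_pos n
  simp only [zero_add] at h2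
  omega

lemma sg_tri (S : RankOne) (hs : S.Steep) {n u v : ℕ} (hu : u < S.r n) (hv : v < S.r n) :
    S.sg n u = S.sg n v ∨ 4 * S.sg n u ≤ S.sg n v ∨ 4 * S.sg n v ≤ S.sg n u := by
  rcases lt_trichotomy u v with h | h | h
  · exact Or.inr (Or.inl (S.sg_gap hs h hv))
  · exact Or.inl (by rw [h])
  · exact Or.inr (Or.inr (S.sg_gap hs h hu))

lemma sg_alt (S : RankOne) (n u : ℕ) : S.sg n u = 0 ∨ S.sg n 1 ≤ S.sg n u := by
  rcases Nat.eq_zero_or_pos u with rfl | hu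
  · left; exact S.sg_zero n
  · right; exact S.sg_mono n hu

lemma four (e a b c d : ℕ) (ha : a = 0 ∨ e ≤ a) (hb : b = 0 ∨ e ≤ b) (hc : c = 0 ∨ e ≤ c)
    (hd : d = 0 ∨ e ≤ d)
    (hab : a = b ∨ 4 * a ≤ b ∨ 4 * b ≤ a) (hac : a = c ∨ 4 * a ≤ c ∨ 4 * c ≤ a)
    (hdb : d = b ∨ 4 * d ≤ b ∨ 4 * b ≤ d) (hdc : d = c ∨ 4 * d ≤ c ∨ 4 * c ≤ d) :
    a + d = b + c ∨ a + d + e ≤ b + c ∨ b + c + e ≤ a + d := by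
  rcases ha with ha | ha <;> rcases hb with hb | hb <;> rcases hc with hc | hc <;>
    rcases hd with hd | hd <;> omega

/-- Descendant heights are confined. -/
lemma dsc_bound (S : RankOne) (hs : S.Steep) {n j : ℕ} (m : ℕ) :
    ∀ d, S.Dsc n j m d → j ≤ d ∧ 3 * (d - j) ≤ S.sg (n + m) 1 := by
  induction m with
  | zero => rintro d rfl; simp
  | succ m ih =>
    rintro d ⟨d', hd', k, hk, rfl⟩
    obtain ⟨h1, h2⟩ := ih d' hd'
    have h3 := S.sg_gap_next hs (n + m)
    have h4 := S.sg_mono (n + m) (show k ≤ S.r (n + m) - 1 by omega)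
    have h5 := S.sg_mono (n + m) (show 1 ≤ S.r (n + m) - 1 by have := S.hr (n + m); omega)
    rw [← add_assoc]
    omega

lemma dsc_split (S : RankOne) {n j a m d : ℕ} (ha : a < S.r n)
    (h : S.Dsc (n + 1) (S.sg n a + j) m d) : S.Dsc n j (m + 1) d := by
  induction m generalizing d with
  | zero => exact ⟨j, rfl, a, ha, h⟩
  | succ m ih =>
    obtain ⟨d', hd', k, hk, rfl⟩ := h
    refine ⟨d', ih hd', k, ?_, ?_⟩
    · rwa [show n + (m + 1) = n + 1 + m by omega]
    · rw [show n + (m + 1) = n + 1 + m by omega]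

lemma key (S : RankOne) (hs : S.Steep) {n j a b : ℕ} (ha : a < S.r n) (hb : b < S.r n)
    (hab : a ≠ b) (m : ℕ) : ∀ x y z t,
    S.Dsc (n + 1) (S.sg n a + j) m x → S.Dsc (n + 1) (S.sg n a + j) m y →
    S.Dsc (n + 1) (S.sg n a + j) m z → S.Dsc (n + 1) (S.sg n b + j) m t →
    x + t ≠ y + z := by
  induction m with
  | zero =>
    rintro x y z t rfl rfl rfl rfl h
    have h1 : S.sg n a = S.sg n b := by omega
    rcases lt_or_gt_of_ne hab with h2 | h2
    · have h3 := S.sg_gap hs h2 hb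
      have h4 := S.sg_mono n (show 1 ≤ b by omega)
      have := S.sg_one_pos n
      omega
    · have h3 := S.sg_gap hs h2 ha
      have h4 := S.sg_mono n (show 1 ≤ a by omega)
      have := S.sg_one_pos n
      omega
  | succ m ih =>
    rintro x y z t ⟨x', hx, kx, hkx, rfl⟩ ⟨y', hy, ky, hky, rfl⟩ ⟨z', hz, kz, hkz, rfl⟩
      ⟨t', ht, kt, hkt, rfl⟩ h
    have hne := ih _ _ _ _ hx hy hz ht
    have bx := S.dsc_bound hs _ _ (S.dsc_split ha hx)
    have bby := S.dsc_bound hs _ _ (S.dsc_split ha hy)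
    have bz := S.dsc_bound hs _ _ (S.dsc_split ha hz)
    have bt := S.dsc_bound hs _ _ (S.dsc_split hb ht)
    rw [show n + (m + 1) = n + 1 + m by omega] at bx bby bz bt
    have hf := four (S.sg (n + 1 + m) 1) _ _ _ _ (S.sg_alt (n + 1 + m) kx)
      (S.sg_alt (n + 1 + m) ky) (S.sg_alt (n + 1 + m) kz) (S.sg_alt (n + 1 + m) kt)
      (S.sg_tri hs hkx hky) (S.sg_tri hs hkx hkz) (S.sg_tri hs hkt hky) (S.sg_tri hs hkt hkz)
    have := S.sg_one_pos (n + 1 + m)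
    omega

lemma bd_countable (S : RankOne) : S.Bd.Countable := Set.countable_range _

instance (S : RankOne) : NullSingletonClass S.μ := by unfold μ; infer_instance

lemma mu_lvl (S : RankOne) (n j : ℕ) : S.μ (S.lvl n j) ≤ ENNReal.ofReal (S.w n) := by
  refine (Measure.restrict_le_self _).trans ?_
  simp [lvl, Real.volume_Ioo]

lemma mu_preimage (S : RankOne) (k : ℕ) (s : Set ℝ) : S.μ ((⇑S.T)^[k] ⁻¹' s) = S.μ s := by
  induction k generalizing s with
  | zero => simp
  | succ k ih =>
    rw [Function.iterate_succ', Set.preimage_comp, ih]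
    exact S.Tpres.measure_preimage_equiv s

/-- Positive-measure returns are seen inside a column. -/
lemma seen (S : RankOne) {n i j k : ℕ} {A B : Set ℝ} (hi : i < S.h n) (hj : j < S.h n)
    (hA : A ⊆ S.lvl n i) (hB : B ⊆ S.lvl n j) (hpos : S.μ (A ∩ (⇑S.T)^[k] '' B) ≠ 0) :
    ∀ᶠ m in atTop, ∃ d, S.Dsc n j m d ∧ S.Dsc n i m (d + k) := by
  have hinj : Function.Injective (⇑S.T)^[k] := S.T.injective.iterate k
  set E := (⇑S.T)^[k] ⁻¹' (A ∩ (⇑S.T)^[k] '' B) with hE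
  have hEpos : S.μ E ≠ 0 := by rw [hE, mu_preimage]; exact hpos
  have hlim : Tendsto (fun m => (k : ENNReal) * ENNReal.ofReal (S.w (n + m))) atTop (nhds 0) := by
    have h1 : Tendsto (fun m => S.w (n + m)) atTop (nhds 0) :=
      S.w_tendsto.comp (tendsto_atTop_mono (fun m => Nat.le_add_left m n) tendsto_id)
    have h2 := ENNReal.tendsto_ofReal h1
    have h3 := ENNReal.Tendsto.const_mul (a := (k : ENNReal)) h2 (Or.inr (by simp))
    simpa using h3
  filter_upwards [hlim.eventually_lt_const (pos_iff_ne_zero.2 hEpos)] with m hm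
  by_contra hcon
  push Not at hcon
  have hsub : E ⊆ (S.Bd ∪ (⇑S.T)^[k] ⁻¹' S.Bd) ∪
      ⋃ l ∈ Finset.range k, S.lvl (n + m) (S.h (n + m) - k + l) := by
    intro y hy
    by_contra hny
    simp only [Set.mem_union, not_or] at hny
    obtain ⟨⟨hy1, hy2⟩, hy3⟩ := hny
    obtain ⟨hyA, y', hyB, hyy⟩ := hy
    have := hinj hyy
    subst this
    obtain ⟨d, hd1, hd2, hd3⟩ := S.exists_dsc hj (hB hyB) hy1 m
    obtain ⟨d', he1, he2, he3⟩ := S.exists_dsc hi (hA hyA) hy2 m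
    by_cases hdk : d + k < S.h (n + m)
    · have := S.iter_lvl k hdk hd3
      have heq := S.lvl_inj hdk he2 this he3
      exact hcon d hd1 (heq ▸ he1)
    · apply hy3
      simp only [Set.mem_iUnion]
      refine ⟨d - (S.h (n + m) - k), Finset.mem_range.2 (by omega), ?_⟩
      rwa [show S.h (n + m) - k + (d - (S.h (n + m) - k)) = d by omega]
  have hle : S.μ E ≤ (k : ENNReal) * ENNReal.ofReal (S.w (n + m)) := by
    refine (measure_mono hsub).trans ((measure_union_le _ _).trans ?_)
    have h0 : S.μ (S.Bd ∪ (⇑S.T)^[k] ⁻¹' S.Bd) = 0 := by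
      refine measure_union_null (S.bd_countable.measure_zero _) ?_
      rw [mu_preimage]
      exact S.bd_countable.measure_zero _
    rw [h0, zero_add]
    refine (measure_biUnion_finset_le _ _).trans ?_
    refine (Finset.sum_le_sum fun l _ => S.mu_lvl (n + m) _).trans ?_
    simp
  exact absurd hm (not_lt.2 hle)

lemma disjoint_returns (S : RankOne) (hs : S.Steep) {n j a b : ℕ} (hj : j < S.h n)
    (ha : a < S.r n) (hb : b < S.r n) (hab : a ≠ b) {A B : Set ℝ}
    (hA : A ⊆ S.lvl (n + 1) (S.sg n a + j)) (hB : B ⊆ S.lvl (n + 1) (S.sg n b + j)) (k : ℕ) :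
    S.μ (A ∩ (⇑S.T)^[k] '' A) = 0 ∨ S.μ (A ∩ (⇑S.T)^[k] '' B) = 0 := by
  by_contra hcon
  push Not at hcon
  have h1 := S.seen (S.sg_lt hj ha) (S.sg_lt hj ha) hA hA hcon.1
  have h2 := S.seen (S.sg_lt hj ha) (S.sg_lt hj hb) hA hB hcon.2
  obtain ⟨m, ⟨d1, p1, p2⟩, ⟨d2, q1, q2⟩⟩ := (h1.and h2).exists
  exact S.key hs ha hb hab m (d1 + k) d1 (d2 + k) d2 p2 p1 q2 q1 (by omega)

lemma exists_split (S : RankOne) {F : Set ℝ} (hF : S.μ F ≠ 0) :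
    ∃ n j a b, j < S.h n ∧ a < S.r n ∧ b < S.r n ∧ a ≠ b ∧
      S.μ (F ∩ S.lvl (n + 1) (S.sg n a + j)) ≠ 0 ∧
      S.μ (F ∩ S.lvl (n + 1) (S.sg n b + j)) ≠ 0 := by
  by_contra hcon
  push Not at hcon
  have hstart : ∃ n j, j < S.h n ∧ S.μ (F ∩ S.lvl n j) ≠ 0 := by
    by_contra h
    push Not at h
    apply hF
    have hXm : MeasurableSet S.X := by
      rw [S.hX]
      exact MeasurableSet.iUnion fun n => MeasurableSet.iUnion fun j =>
        MeasurableSet.iUnion fun _ => measurableSet_Ioo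
    have hXc : S.μ S.Xᶜ = 0 := by
      unfold μ
      rw [Measure.restrict_apply hXm.compl]
      simp
    have hFX : S.μ (⋃ n, ⋃ j, ⋃ _ : j < S.h n, F ∩ S.lvl n j) = 0 :=
      measure_iUnion_null fun n => measure_iUnion_null fun j => measure_iUnion_null fun hj => h n j hj
    refine measure_mono_null ?_ (measure_union_null hFX hXc)
    intro x hx
    by_cases hxX : x ∈ S.X
    · left
      rw [S.hX] at hxX
      simp only [Set.mem_iUnion] at hxX ⊢
      obtain ⟨n, j, hj, hxj⟩ := hxX
      exact ⟨n, j, hj, hx, hxj⟩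
    · right; exact hxX
  obtain ⟨n, j, hj, hpos⟩ := hstart
  have hall : ∀ m, ∃ i, i < S.h (n + m) ∧ S.μ (F ∩ S.lvl n j) ≤ S.μ (F ∩ S.lvl (n + m) i) := by
    intro m
    induction m with
    | zero => exact ⟨j, hj, le_rfl⟩
    | succ m ih =>
      obtain ⟨i, hi, hle⟩ := ih
      have hsub : F ∩ S.lvl (n + m) i ⊆ S.Bd ∪
          ⋃ k, ⋃ _ : k < S.r (n + m), F ∩ S.lvl (n + m + 1) (S.sg (n + m) k + i) := by
        rintro x ⟨hxF, hxl⟩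
        by_cases hb : x ∈ S.Bd
        · left; exact hb
        · right
          obtain ⟨k, hk, hk2⟩ := S.lvl_cover hi hxl hb
          simp only [Set.mem_iUnion]
          exact ⟨k, hk, hxF, hk2⟩
      by_cases hex : ∃ c, c < S.r (n + m) ∧ S.μ (F ∩ S.lvl (n + m + 1) (S.sg (n + m) c + i)) ≠ 0
      · obtain ⟨c, hc, hcpos⟩ := hex
        refine ⟨S.sg (n + m) c + i, S.sg_lt hi hc, hle.trans ?_⟩
        have hsub2 : F ∩ S.lvl (n + m) i ⊆ (S.Bd ∪
            ⋃ k, ⋃ _ : k < S.r (n + m) ∧ c ≠ k, F ∩ S.lvl (n + m + 1) (S.sg (n + m) k + i)) ∪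
            (F ∩ S.lvl (n + m + 1) (S.sg (n + m) c + i)) := by
          intro x hx
          rcases hsub hx with h | h
          · left; left; exact h
          · simp only [Set.mem_iUnion] at h
            obtain ⟨k, hk, hxk⟩ := h
            by_cases hck : c = k
            · right; rw [hck]; exact hxk
            · left; right
              simp only [Set.mem_iUnion]
              exact ⟨k, ⟨hk, hck⟩, hxk⟩
        refine (measure_mono hsub2).trans ((measure_union_le _ _).trans ?_)
        rw [measure_union_null (S.bd_countable.measure_zero _), zero_add]
        · rfl
        · exact measure_iUnion_null fun k => measure_iUnion_null fun hk =>
            hcon (n + m) i c k hi hc hk.1 hk.2 hcpos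
      · push Not at hex
        exfalso
        have : S.μ (F ∩ S.lvl (n + m) i) = 0 :=
          measure_mono_null hsub (measure_union_null (S.bd_countable.measure_zero _)
            (measure_iUnion_null fun k => measure_iUnion_null fun hk => hex k hk))
        rw [this] at hle
        exact hpos (le_antisymm hle bot_le)
  have hlim : Tendsto (fun m => ENNReal.ofReal (S.w (n + m))) atTop (nhds 0) := by
    have h1 : Tendsto (fun m => S.w (n + m)) atTop (nhds 0) :=
      S.w_tendsto.comp (tendsto_atTop_mono (fun m => Nat.le_add_left m n) tendsto_id)
    simpa using ENNReal.tendsto_ofReal h1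
  obtain ⟨m, hm⟩ := (hlim.eventually_lt_const (pos_iff_ne_zero.2 hpos)).exists
  obtain ⟨i, _, hle⟩ := hall m
  exact absurd hm (not_lt.2 (hle.trans ((measure_mono Set.inter_subset_right).trans (S.mu_lvl _ _))))

end RankOne

/-- A normal, steep rank-one transformation is not rationally weakly
mixing. -/
theorem statement10 (S : RankOne) (hnorm : S.Normal) (hsteep : S.Steep) :
    ¬ S.RWM := by
  rintro ⟨F, hFm, hF0, hFt, hF⟩
  obtain ⟨n, j, a, b, hj, ha, hb, hab, hA0, hB0⟩ := S.exists_split hF0.ne'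
  set A := F ∩ S.lvl (n + 1) (S.sg n a + j) with hAdef
  set B := F ∩ S.lvl (n + 1) (S.sg n b + j) with hBdef
  have hAm : MeasurableSet A := hFm.inter measurableSet_Ioo
  have hBm : MeasurableSet B := hFm.inter measurableSet_Ioo
  have hAF : A ⊆ F := Set.inter_subset_left
  have hBF : B ⊆ F := Set.inter_subset_left
  have hAt : S.μ A ≠ ⊤ := ne_top_of_le_ne_top hFt (measure_mono hAF)
  have hBt : S.μ B ≠ ⊤ := ne_top_of_le_ne_top hFt (measure_mono hBF)
  have hdis := fun k => S.disjoint_returns hsteep hj ha hb hab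
    (A := A) (B := B) Set.inter_subset_right Set.inter_subset_right k
  have hAp : 0 < (S.μ A).toReal := ENNReal.toReal_pos hA0 hAt
  have hBp : 0 < (S.μ B).toReal := ENNReal.toReal_pos hB0 hBt
  have hFp : 0 < (S.μ F).toReal := ENNReal.toReal_pos hF0.ne' hFt
  have hu : ∀ k, 0 ≤ S.u F k := fun k => by unfold RankOne.u; positivity
  have hu0 : 0 < S.u F 0 := by
    unfold RankOne.u
    simp only [Function.iterate_zero, Set.image_id, Set.inter_self]
    positivity
  have hapos : ∀ N, 1 ≤ N → 0 < S.a F N := fun N hN =>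
    Finset.sum_pos' (fun k _ => hu k) ⟨0, Finset.mem_range.2 (by omega), hu0⟩
  have hlim := (hF A A hAm hAF hAm hAF).add (hF A B hAm hAF hBm hBF)
  set c := min ((S.μ A).toReal * (S.μ A).toReal) ((S.μ A).toReal * (S.μ B).toReal) with hc
  have hcpos : 0 < c := lt_min (by positivity) (by positivity)
  rw [add_zero] at hlim
  refine absurd (ge_of_tendsto hlim (b := c) ?_) (not_le.2 hcpos)
  filter_upwards [eventually_ge_atTop 1] with N hN
  have hap := hapos N hN
  rw [← mul_add, ← Finset.sum_add_distrib]
  have hsum : c * S.a F N ≤ ∑ k ∈ Finset.range N,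
      (|(S.μ (A ∩ (⇑S.T)^[k] '' A)).toReal - (S.μ A).toReal * (S.μ A).toReal * S.u F k| +
       |(S.μ (A ∩ (⇑S.T)^[k] '' B)).toReal - (S.μ A).toReal * (S.μ B).toReal * S.u F k|) := by
    unfold RankOne.a
    rw [Finset.mul_sum]
    refine Finset.sum_le_sum fun k _ => ?_
    rcases hdis k with h | h
    · have h1 : c * S.u F k ≤ (S.μ A).toReal * (S.μ A).toReal * S.u F k :=
        mul_le_mul_of_nonneg_right (min_le_left _ _) (hu k)
      refine (h1.trans ?_).trans (le_add_of_nonneg_right (abs_nonneg _))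
      rw [h, ENNReal.toReal_zero, zero_sub, abs_neg]
      exact le_abs_self _
    · have h1 : c * S.u F k ≤ (S.μ A).toReal * (S.μ B).toReal * S.u F k :=
        mul_le_mul_of_nonneg_right (min_le_right _ _) (hu k)
      refine (h1.trans ?_).trans (le_add_of_nonneg_left (abs_nonneg _))
      rw [h, ENNReal.toReal_zero, zero_sub, abs_neg]
      exact le_abs_self _
  calc c = (S.a F N)⁻¹ * (c * S.a F N) := by field_simp
    _ ≤ _ := mul_le_mul_of_nonneg_left hsum (inv_nonneg.2 hap.le)
end

section
/- Let T be an invertible measure-preserving transformation of a σ-finite measure space (X, B, μ) with μ(X) > 0 that is doubly ergodic, and define S on X × {0, 1}, equipped with the product of μ and counting measure ν, by S(x, 0) = (T(x), 1) and S(x, 1) = (x, 0). Then S is doubly ergodic on X × {0} and on X × {1} (for all measurable A, B contained in X × {0}, respectively in X × {1}, of positive measure there is a positive integer n with ν-positive measure of A ∩ S^n A and of B ∩ S^n A), but S is not doubly ergodic on X × {0, 1}: for A = X × {0} and B = X × {1} there is no positive integer n for which both A ∩ S^n A and B ∩ S^n A have positive measure. -/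
open MeasureTheory Filter Set Pointwise

/-- The two-point extension `S(x, 0) = (T x, 1)`, `S(x, 1) = (x, 0)` (with `false = 0`,
`true = 1`). -/
def twoPointExt {X : Type*} (T : X → X) : X × Bool → X × Bool :=
  fun p => if p.2 then (p.1, false) else (T p.1, true)

theorem twoPointExt_iter {X : Type*} (T : X → X) (n : ℕ) (x : X) (b : Bool) :
    (twoPointExt T)^[2 * n] (x, b) = (T^[n] x, b) := by
  induction n generalizing x with
  | zero => rfl
  | succ k ih =>
    have h2 : twoPointExt T (twoPointExt T (x, b)) = (T x, b) := by
      cases b <;> simp [twoPointExt]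
    rw [show 2 * (k + 1) = 2 * k + 1 + 1 by ring, Function.iterate_succ_apply,
      Function.iterate_succ_apply, h2, ih, Function.iterate_succ_apply]

theorem twoPointExt_image {X : Type*} (T : X → X) (n : ℕ) (A : Set X) (b : Bool) :
    (twoPointExt T)^[2 * n] '' (A ×ˢ {b}) = (T^[n] '' A) ×ˢ {b} := by
  ext ⟨y, c⟩
  constructor
  · rintro ⟨⟨x, d⟩, ⟨hx, hd⟩, h⟩
    simp only [Set.mem_singleton_iff] at hd
    subst hd
    rw [twoPointExt_iter] at h
    simp only [Prod.mk.injEq] at h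
    exact ⟨⟨x, hx, h.1⟩, h.2.symm⟩
  · rintro ⟨⟨x, hx, h⟩, hc⟩
    simp only [Set.mem_singleton_iff] at hc h
    subst hc
    exact ⟨(x, c), ⟨hx, rfl⟩, by rw [twoPointExt_iter, h]⟩

theorem twoPointExt_layer {X : Type*} [MeasurableSpace X] (μ : Measure X) [SigmaFinite μ]
    (T : X → X)
    (hde : ∀ A B : Set X, MeasurableSet A → MeasurableSet B → 0 < μ A → 0 < μ B →
      ∃ n : ℕ, 0 < n ∧ 0 < μ (A ∩ T^[n] '' A) ∧ 0 < μ (B ∩ T^[n] '' A)) (b : Bool)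
    (A B : Set (X × Bool)) (hA : MeasurableSet A) (hB : MeasurableSet B)
    (hAb : A ⊆ Set.univ ×ˢ ({b} : Set Bool)) (hBb : B ⊆ Set.univ ×ˢ ({b} : Set Bool))
    (hA0 : 0 < (μ.prod Measure.count) A) (hB0 : 0 < (μ.prod Measure.count) B) :
    ∃ n : ℕ, 0 < n ∧ 0 < (μ.prod Measure.count) (A ∩ (twoPointExt T)^[n] '' A) ∧
      0 < (μ.prod Measure.count) (B ∩ (twoPointExt T)^[n] '' A) := by
  have key : ∀ C : Set (X × Bool), MeasurableSet C → C ⊆ Set.univ ×ˢ ({b} : Set Bool) →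
      ∃ C' : Set X, MeasurableSet C' ∧ C = C' ×ˢ {b} := by
    intro C hC hCb
    refine ⟨(fun x => (x, b)) ⁻¹' C, measurable_prodMk_right hC, ?_⟩
    ext ⟨x, c⟩
    constructor
    · intro h
      have hc : c = b := (hCb h).2
      subst hc
      exact ⟨h, rfl⟩
    · rintro ⟨h, hc⟩
      simp only [Set.mem_singleton_iff] at hc
      subst hc
      exact h
  have meas : ∀ C : Set X, (μ.prod Measure.count) (C ×ˢ ({b} : Set Bool)) = μ C := by
    intro C
    rw [Measure.prod_prod, Measure.count_singleton, mul_one]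
  obtain ⟨A', hA', rfl⟩ := key A hA hAb
  obtain ⟨B', hB', rfl⟩ := key B hB hBb
  rw [meas] at hA0 hB0
  obtain ⟨n, hn, h1, h2⟩ := hde A' B' hA' hB' hA0 hB0
  refine ⟨2 * n, by omega, ?_, ?_⟩
  · rw [twoPointExt_image, ← Set.inter_prod, meas]
    exact h1
  · rw [twoPointExt_image, ← Set.inter_prod, meas]
    exact h2

/-- If `T` is an invertible measure-preserving doubly ergodic
transformation of a σ-finite measure space of positive measure, then the two-point extension
`S` is doubly ergodic on `X × {0}` and on `X × {1}`, but not doubly ergodic on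
`X × {0, 1}`: for `A = X × {0}` and `B = X × {1}` no positive integer `n` makes both
`A ∩ SⁿA` and `B ∩ SⁿA` of positive measure. -/
theorem statement13 {X : Type*} [MeasurableSpace X] (μ : Measure X) [SigmaFinite μ]
    (hpos : 0 < μ Set.univ) (T : X ≃ᵐ X) (hT : MeasurePreserving (⇑T) μ μ)
    (hde : ∀ A B : Set X, MeasurableSet A → MeasurableSet B → 0 < μ A → 0 < μ B →
      ∃ n : ℕ, 0 < n ∧ 0 < μ (A ∩ (⇑T)^[n] '' A) ∧ 0 < μ (B ∩ (⇑T)^[n] '' A)) :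
    (∀ A B : Set (X × Bool), MeasurableSet A → MeasurableSet B →
        A ⊆ Set.univ ×ˢ ({false} : Set Bool) → B ⊆ Set.univ ×ˢ ({false} : Set Bool) →
        0 < (μ.prod Measure.count) A → 0 < (μ.prod Measure.count) B →
        ∃ n : ℕ, 0 < n ∧ 0 < (μ.prod Measure.count) (A ∩ (twoPointExt ⇑T)^[n] '' A) ∧
          0 < (μ.prod Measure.count) (B ∩ (twoPointExt ⇑T)^[n] '' A)) ∧
    (∀ A B : Set (X × Bool), MeasurableSet A → MeasurableSet B →
        A ⊆ Set.univ ×ˢ ({true} : Set Bool) → B ⊆ Set.univ ×ˢ ({true} : Set Bool) →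
        0 < (μ.prod Measure.count) A → 0 < (μ.prod Measure.count) B →
        ∃ n : ℕ, 0 < n ∧ 0 < (μ.prod Measure.count) (A ∩ (twoPointExt ⇑T)^[n] '' A) ∧
          0 < (μ.prod Measure.count) (B ∩ (twoPointExt ⇑T)^[n] '' A)) ∧
    ¬ ∃ n : ℕ, 0 < n ∧
        0 < (μ.prod Measure.count) ((Set.univ ×ˢ ({false} : Set Bool)) ∩
          (twoPointExt ⇑T)^[n] '' (Set.univ ×ˢ ({false} : Set Bool))) ∧
        0 < (μ.prod Measure.count) ((Set.univ ×ˢ ({true} : Set Bool)) ∩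
          (twoPointExt ⇑T)^[n] '' (Set.univ ×ˢ ({false} : Set Bool))) := by
  refine ⟨twoPointExt_layer μ T hde false, twoPointExt_layer μ T hde true, ?_⟩
  rintro ⟨n, -, h1, h2⟩
  obtain ⟨⟨y, c⟩, ⟨-, hc⟩, ⟨⟨x, d⟩, ⟨-, hd⟩, h⟩⟩ := nonempty_of_measure_ne_zero h1.ne'
  obtain ⟨⟨y', c'⟩, ⟨-, hc'⟩, ⟨⟨x', d'⟩, ⟨-, hd'⟩, h'⟩⟩ := nonempty_of_measure_ne_zero h2.ne'
  simp only [Set.mem_singleton_iff] at hc hd hc' hd'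
  subst hc hd hc' hd'
  obtain ⟨k, rfl | rfl⟩ := Nat.even_or_odd' n
  · rw [twoPointExt_iter] at h'
    simp at h'
  · rw [Function.iterate_succ_apply', twoPointExt_iter] at h
    simp [twoPointExt] at h
end

section
/- There exists a rank-one transformation T of an infinite σ-finite nonatomic measure space (X, B, μ) that is zero-type but not rationally weakly mixing. -/
open MeasureTheory Filter Set Pointwise

namespace R1

def r (n : ℕ) : ℕ := n + 2

def h : ℕ → ℕ
  | 0 => 1
  | n + 1 => 2 * h n * (2 ^ r n - 1)

noncomputable def w : ℕ → ℝ
  | 0 => 1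
  | n + 1 => w n / (r n : ℝ)

def s (n k : ℕ) : ℕ := h n * (2 ^ (k + 1) - 1)

noncomputable def E : ℕ → ℝ
  | 0 => 1
  | n + 1 => E n + h (n + 1) * w (n + 1)

/-- base height of the `k`-th subcolumn of `C n` in `C (n+1)`. -/
def G (n k : ℕ) : ℕ := 2 * h n * (2 ^ k - 1)

open Classical in
noncomputable def pos : ℕ → ℕ → ℝ
  | 0, _ => 0
  | n + 1, t =>
    if H : ∃ q : ℕ × ℕ, q.1 < r n ∧ q.2 < h n ∧ t = G n q.1 + q.2 then
      pos n (Classical.choose H).2 + (Classical.choose H).1 * w (n + 1)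
    else E n + t * w (n + 1)

def L (n j : ℕ) : Set ℝ := Set.Ioo (pos n j) (pos n j + w n)

lemma h_pos (n : ℕ) : 0 < h n := by
  induction n with
  | zero => simp [h]
  | succ n ih =>
    have : 2 ^ 1 ≤ 2 ^ r n := Nat.pow_le_pow_right (by norm_num) (by simp [r])
    simp only [h]
    have : 0 < 2 ^ r n - 1 := by omega
    positivity

lemma r_pos (n : ℕ) : (0 : ℝ) < r n := by simp only [r]; positivity

lemma w_pos (n : ℕ) : 0 < w n := by
  induction n with
  | zero => simp [w]
  | succ n ih => have := r_pos n; simp only [w]; positivity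

lemma w_succ (n : ℕ) : (r n : ℝ) * w (n + 1) = w n := by
  have := r_pos n
  simp only [w]; field_simp

lemma w_le (n : ℕ) : w n ≤ 1 / (n + 1 : ℝ) := by
  have hw : w n ≤ 1 ∧ w n ≤ 1 / (n + 1 : ℝ) := by
    induction n with
    | zero => simp [w]
    | succ n ih =>
      have h1 : w (n + 1) ≤ 1 / ((n : ℝ) + 2) := by
        simp only [w, r]; push_cast
        gcongr
        exact ih.1
      refine ⟨h1.trans ?_, h1.trans (le_of_eq ?_)⟩
      · rw [div_le_one (by positivity)]; linarith [(Nat.cast_nonneg n : (0 : ℝ) ≤ n)]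
      · push_cast; ring
  exact hw.2

lemma w_tendsto : Tendsto w atTop (nhds 0) :=
  squeeze_zero (fun n => (w_pos n).le) w_le tendsto_one_div_add_atTop_nhds_zero_nat

lemma hs (n k : ℕ) : h n + s n k = h n * 2 ^ (k + 1) := by
  have : 1 ≤ 2 ^ (k + 1) := Nat.one_le_two_pow
  obtain ⟨c, hc⟩ := Nat.exists_eq_add_of_le this
  simp only [s, hc]
  rw [Nat.add_sub_cancel_left]; ring

lemma sum_hs (n k : ℕ) : ∑ i ∈ Finset.range k, (h n + s n i) = G n k := by
  induction k with
  | zero => simp [G]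
  | succ k ih =>
    rw [Finset.sum_range_succ, ih, hs]
    simp only [G]
    have : 1 ≤ 2 ^ k := Nat.one_le_two_pow
    obtain ⟨c, hc⟩ := Nat.exists_eq_add_of_le this
    rw [pow_succ, hc, show (1 + c) * 2 - 1 = 1 + 2 * c by omega, Nat.add_sub_cancel_left]
    ring

lemma G_zero (n : ℕ) : G n 0 = 0 := by simp [G]

lemma h_succ (n : ℕ) : h (n + 1) = G n (r n) := rfl

lemma h_dvd_G (n k : ℕ) : h n ∣ G n k := ⟨2 * (2 ^ k - 1), by simp only [G]; ring⟩

lemma h_dvd {m n : ℕ} (hmn : m ≤ n) : h m ∣ h n := by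
  induction n, hmn using Nat.le_induction with
  | base => exact dvd_rfl
  | succ n _ ih => exact ih.trans (h_dvd_G n (r n))

lemma G_add (n k : ℕ) : G n k + 2 * h n = 2 * h n * 2 ^ k := by
  have : 1 ≤ 2 ^ k := Nat.one_le_two_pow
  obtain ⟨c, hc⟩ := Nat.exists_eq_add_of_le this
  simp only [G, hc]
  rw [Nat.add_sub_cancel_left]; ring

lemma G_lt {n k j : ℕ} (hk : k < r n) (hj : j < h n) : 2 * (G n k + j) + 1 < h (n + 1) := by
  have h1 := G_add n k
  have h2 := G_add n (r n)
  have h3 : 2 * 2 ^ k ≤ 2 ^ r n := by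
    rw [← pow_succ']; exact Nat.pow_le_pow_right (by norm_num) hk
  have h4 : 2 * h n * (2 * 2 ^ k) ≤ 2 * h n * 2 ^ r n := Nat.mul_le_mul_left _ h3
  rw [h_succ]
  have : 2 * h n * (2 * 2 ^ k) = 2 * (2 * h n * 2 ^ k) := by ring
  omega

lemma h_lt (n : ℕ) : 2 * h n ≤ h (n + 1) := by
  have := G_lt (n := n) (k := 0) (j := h n - 1) (by simp [r]) (by have := h_pos n; omega)
  have := h_pos n
  rw [G_zero] at *
  have h5 : Even (h (n+1)) := ⟨h n * (2 ^ r n - 1), by simp only [h]; ring⟩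
  obtain ⟨c, hc⟩ := h5
  omega

lemma le_h (n : ℕ) : n + 1 ≤ h n := by
  induction n with
  | zero => simp [h]
  | succ n ih => have := h_lt n; omega

lemma G_inj {n k k' j j' : ℕ} (hj : j < h n) (hj' : j' < h n)
    (H : G n k + j = G n k' + j') : k = k' ∧ j = j' := by
  have hh := h_pos n
  have h1 : j = j' := by
    have e1 : (G n k + j) % (2 * h n) = j := by
      simp only [G]; rw [Nat.mul_add_mod]; exact Nat.mod_eq_of_lt (by omega)
    have e2 : (G n k' + j') % (2 * h n) = j' := by
      simp only [G]; rw [Nat.mul_add_mod]; exact Nat.mod_eq_of_lt (by omega)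
    rw [← e1, ← e2, H]
  refine ⟨?_, h1⟩
  have a1 := G_add n k
  have a2 := G_add n k'
  have a3 : 2 * h n * 2 ^ k = 2 * h n * 2 ^ k' := by omega
  have a4 := Nat.eq_of_mul_eq_mul_left (by omega) a3
  exact Nat.pow_right_injective le_rfl a4

lemma pos_stack {n k j : ℕ} (hk : k < r n) (hj : j < h n) :
    pos (n + 1) (G n k + j) = pos n j + k * w (n + 1) := by
  have H : ∃ q : ℕ × ℕ, q.1 < r n ∧ q.2 < h n ∧ G n k + j = G n q.1 + q.2 := ⟨(k, j), hk, hj, rfl⟩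
  simp only [pos]
  rw [dif_pos H]
  obtain ⟨h1, h2, h3⟩ := Classical.choose_spec H
  obtain ⟨h4, h5⟩ := G_inj hj h2 h3
  rw [← h4, ← h5]

lemma pos_spacer {n t : ℕ} (H : ¬ ∃ q : ℕ × ℕ, q.1 < r n ∧ q.2 < h n ∧ t = G n q.1 + q.2) :
    pos (n + 1) t = E n + t * w (n + 1) := by
  simp only [pos]
  rw [dif_neg H]

lemma pos_bot (n : ℕ) : pos n 0 = 0 := by
  induction n with
  | zero => simp [pos]
  | succ n ih =>
    have := pos_stack (n := n) (k := 0) (j := 0) (by simp [r]) (h_pos n)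
    rw [G_zero] at this
    simpa [ih] using this

lemma sub_w {n k : ℕ} (hk : k < r n) : (k : ℝ) * w (n + 1) + w (n + 1) ≤ w n := by
  rw [← w_succ n]
  have : (k : ℝ) + 1 ≤ r n := by exact_mod_cast hk
  nlinarith [w_pos (n + 1)]

lemma E_nonneg (n : ℕ) : 0 ≤ E n := by
  induction n with
  | zero => simp [E]
  | succ n ih => have := w_pos (n+1); simp only [E]; positivity

lemma E_mono : Monotone E := monotone_nat_of_le_succ fun n => by
  have := w_pos (n+1)
  simp only [E]
  have : 0 ≤ (h (n + 1) : ℝ) * w (n + 1) := by positivity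
  linarith

lemma pos_bounds (n : ℕ) : ∀ j < h n, 0 ≤ pos n j ∧ pos n j + w n ≤ E n := by
  induction n with
  | zero => intro j _; simp [pos, w, E]
  | succ n ih =>
    intro t ht
    have hw := w_pos (n + 1)
    by_cases H : ∃ q : ℕ × ℕ, q.1 < r n ∧ q.2 < h n ∧ t = G n q.1 + q.2
    · obtain ⟨⟨k, j⟩, hk, hj, rfl⟩ := H
      obtain ⟨h1, h2⟩ := ih j hj
      have h3 := sub_w hk
      have h4 := E_mono (Nat.le_succ n)
      simp only at *
      rw [pos_stack hk hj]
      constructor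
      · positivity
      · simp only [Nat.succ_eq_add_one] at h4; linarith
    · rw [pos_spacer H]
      have := E_nonneg n
      refine ⟨by positivity, ?_⟩
      simp only [E]
      have : (t : ℝ) + 1 ≤ h (n + 1) := by exact_mod_cast ht
      nlinarith

lemma L_sub {n k j : ℕ} (hk : k < r n) (hj : j < h n) : L (n + 1) (G n k + j) ⊆ L n j := by
  intro x hx
  simp only [L, Set.mem_Ioo, pos_stack hk hj] at *
  have := sub_w hk
  have := w_pos (n + 1)
  have : (0 : ℝ) ≤ k * w (n + 1) := by positivity
  constructor <;> linarith

lemma L_le {n j : ℕ} (hj : j < h n) {x : ℝ} (hx : x ∈ L n j) : x < E n :=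
  hx.2.trans_le (pos_bounds n j hj).2

/-- key coherence step -/
lemma L_dec {m n t : ℕ} {x : ℝ} (ht : t < h (n + 1)) (hx : x ∈ L (n + 1) t)
    (hm : m ≤ n) {j : ℕ} (hj : j < h m) (hxj : x ∈ L m j) :
    ∃ k i, k < r n ∧ i < h n ∧ t = G n k + i ∧ x ∈ L n i := by
  by_cases H : ∃ q : ℕ × ℕ, q.1 < r n ∧ q.2 < h n ∧ t = G n q.1 + q.2
  · obtain ⟨⟨k, j⟩, hk, hj, rfl⟩ := H
    exact ⟨k, j, hk, hj, rfl, L_sub hk hj hx⟩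
  · exfalso
    have h1 := L_le hj hxj
    have h2 := hx.1
    rw [pos_spacer H] at h2
    have h3 := E_mono hm
    have := w_pos (n + 1)
    have : (0 : ℝ) ≤ t * w (n + 1) := by positivity
    linarith

lemma disj (n : ℕ) : ∀ j < h n, ∀ j' < h n, j ≠ j' → Disjoint (L n j) (L n j') := by
  induction n with
  | zero => intro j hj j' hj' hne; simp [h] at *; omega
  | succ n ih =>
    intro t ht t' ht' hne
    rw [Set.disjoint_left]
    intro x hx hx'
    have hw := w_pos (n + 1)
    have main : ∀ t < h (n+1), ∀ t' < h (n+1), t ≠ t' → x ∈ L (n+1) t → x ∈ L (n+1) t' →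
        (∃ q : ℕ × ℕ, q.1 < r n ∧ q.2 < h n ∧ t = G n q.1 + q.2) → False := by
      intro t ht t' ht' hne hx hx' H
      obtain ⟨⟨k, j⟩, hk, hj, rfl⟩ := H
      have hxj := L_sub hk hj hx
      obtain ⟨k', j', hk', hj', rfl, hxj'⟩ := L_dec ht' hx' le_rfl hj hxj
      have : j = j' := by
        by_contra hc
        exact Set.disjoint_left.1 (ih j hj j' hj' hc) hxj hxj'
      subst this
      have hkk : k ≠ k' := fun e => hne (by rw [e])
      simp only [L, Set.mem_Ioo, pos_stack hk hj, pos_stack hk' hj'] at hx hx'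
      rcases lt_or_gt_of_ne hkk with hl | hl
      · have : (k : ℝ) + 1 ≤ k' := by exact_mod_cast hl
        nlinarith
      · have : (k' : ℝ) + 1 ≤ k := by exact_mod_cast hl
        nlinarith
    by_cases H : ∃ q : ℕ × ℕ, q.1 < r n ∧ q.2 < h n ∧ t = G n q.1 + q.2
    · exact main t ht t' ht' hne hx hx' H
    by_cases H' : ∃ q : ℕ × ℕ, q.1 < r n ∧ q.2 < h n ∧ t' = G n q.1 + q.2
    · exact main t' ht' t ht hne.symm hx' hx H'
    simp only [L, Set.mem_Ioo, pos_spacer H, pos_spacer H'] at hx hx'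
    rcases lt_or_gt_of_ne hne with hl | hl
    · have : (t : ℝ) + 1 ≤ t' := by exact_mod_cast hl
      nlinarith
    · have : (t' : ℝ) + 1 ≤ t := by exact_mod_cast hl
      nlinarith

lemma L_unique {n j j' : ℕ} (hj : j < h n) (hj' : j' < h n) {x : ℝ} (hx : x ∈ L n j)
    (hy : x ∈ L n j') : j = j' := by
  by_contra hc
  exact Set.disjoint_left.1 (disj n j hj j' hj' hc) hx hy

/-- The union of the levels of column `n`. -/
def C (n : ℕ) : Set ℝ := ⋃ j < h n, L n j

lemma mem_C {n : ℕ} {x : ℝ} : x ∈ C n ↔ ∃ j, j < h n ∧ x ∈ L n j := by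
  simp [C]

/-- Coherence between columns. -/
lemma coh {m n : ℕ} (hmn : m ≤ n) : ∀ {i j : ℕ} {x : ℝ}, i < h m → j < h n → x ∈ L m i → x ∈ L n j →
    L n j ⊆ L m i ∧ ∃ g δ, j = g + i ∧ h m ∣ g ∧
      ∀ i' < h m, g + i' < h n ∧ pos n (g + i') = pos m i' + δ := by
  induction n, hmn using Nat.le_induction with
  | base =>
    intro i j x hi hj hx hx'
    obtain rfl := L_unique hi hj hx hx'
    exact ⟨subset_rfl, 0, 0, by simp, by simp, fun i' hi' => by simpa using hi'⟩
  | succ n hmn ih =>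
    intro i j x hi hj hx hx'
    obtain ⟨k, t, hk, ht, rfl, hxt⟩ := L_dec hj hx' hmn hi hx
    obtain ⟨hs, g, δ, rfl, hg, H⟩ := ih hi ht hx hxt
    refine ⟨(L_sub hk ht).trans hs, G n k + g, δ + k * w (n + 1), by ring,
      dvd_add ((h_dvd hmn).trans (h_dvd_G n k)) hg, fun i' hi' => ?_⟩
    obtain ⟨h1, h2⟩ := H i' hi'
    have := G_lt hk h1
    rw [add_assoc]
    refine ⟨by omega, ?_⟩
    rw [pos_stack hk h1, h2]; ring

lemma C_between {m n p : ℕ} (hmn : m ≤ n) (hnp : n ≤ p) {x : ℝ} (hx : x ∈ C m) (hx' : x ∈ C p) :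
    x ∈ C n := by
  induction p, hnp using Nat.le_induction with
  | base => exact hx'
  | succ p hp ih =>
    obtain ⟨i, hi, hxi⟩ := mem_C.1 hx
    obtain ⟨j, hj, hxj⟩ := mem_C.1 hx'
    obtain ⟨k, t, hk, ht, rfl, hxt⟩ := L_dec hj hxj (hmn.trans hp) hi hxi
    exact ih (mem_C.2 ⟨t, ht, hxt⟩)

lemma half {m n j : ℕ} (hmn : m < n) {x : ℝ} (hx : x ∈ C m) (hj : j < h n) (hxj : x ∈ L n j) :
    2 * j + 1 < h n := by
  obtain ⟨i, hi, hxi⟩ := mem_C.1 hx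
  obtain ⟨n, rfl⟩ : ∃ p, n = p + 1 := ⟨n - 1, by omega⟩
  obtain ⟨k, t, hk, ht, rfl, hxt⟩ := L_dec hj hxj (Nat.lt_succ_iff.1 hmn) hi hxi
  exact G_lt hk ht

/-- The exceptional countable set. -/
def N : Set ℝ := ⋃ n, C n \ C (n + 1)

lemma cut {n j : ℕ} (hj : j < h n) {x : ℝ} (hx : x ∈ L n j) (hx' : x ∉ C (n + 1)) :
    ∃ k : ℕ, x = pos n j + k * w (n + 1) := by
  have hw := w_pos (n + 1)
  set y := (x - pos n j) / w (n + 1) with hy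
  have hx1 := hx.1
  have hx2 := hx.2
  have y0 : 0 ≤ y := div_nonneg (by linarith) hw.le
  have hxy : x = pos n j + y * w (n + 1) := by rw [hy]; field_simp; ring
  refine ⟨⌊y⌋₊, ?_⟩
  by_contra hne
  apply hx'
  have f1 := Nat.floor_le y0
  have f2 := Nat.lt_floor_add_one y
  have yr : y < r n := by
    rw [hy, div_lt_iff₀ hw, w_succ]; linarith
  have hk : ⌊y⌋₊ < r n := by rw [Nat.floor_lt y0]; exact yr
  have hlt : (⌊y⌋₊ : ℝ) < y := by
    rcases f1.lt_or_eq with h1 | h1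
    · exact h1
    · rw [h1] at hne; exact absurd hxy hne
  have := G_lt hk hj
  refine mem_C.2 ⟨G n ⌊y⌋₊ + j, by omega, ?_⟩
  simp only [L, Set.mem_Ioo, pos_stack hk hj]
  constructor
  · rw [hxy]; nlinarith
  · rw [hxy]; nlinarith

lemma not_cut {n j k : ℕ} (hj : j < h n) (hx : pos n j + (k : ℝ) * w (n + 1) ∈ L n j) :
    pos n j + (k : ℝ) * w (n + 1) ∉ C (n + 1) := by
  intro hc
  have hw := w_pos (n + 1)
  obtain ⟨t₀, ht₀, hxt⟩ := mem_C.1 hc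
  obtain ⟨k', t, hk, ht, rfl, hxt'⟩ := L_dec ht₀ hxt le_rfl hj hx
  obtain rfl := L_unique hj ht hx hxt'
  simp only [L, Set.mem_Ioo, pos_stack hk ht] at hxt
  have h1 : (k' : ℝ) < k := by nlinarith
  have h2 : (k : ℝ) < k' + 1 := by nlinarith
  have : k' < k := by exact_mod_cast h1
  have : k < k' + 1 := by exact_mod_cast h2
  omega

lemma N_countable : N.Countable := by
  refine Set.countable_iUnion fun n => ?_
  refine Set.Countable.mono (s₂ := Set.range fun q : ℕ × ℕ => pos n q.1 + q.2 * w (n + 1)) ?_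
    (Set.countable_range _)
  rintro x ⟨hx, hx'⟩
  obtain ⟨j, hj, hxj⟩ := mem_C.1 hx
  obtain ⟨k, hk⟩ := cut hj hxj hx'
  exact ⟨(j, k), hk.symm⟩

lemma C_mono {m n : ℕ} (hmn : m ≤ n) {x : ℝ} (hx : x ∈ C m) (hN : x ∉ N) : x ∈ C n := by
  induction n, hmn using Nat.le_induction with
  | base => exact hx
  | succ n _ ih =>
    by_contra hc
    exact hN (Set.mem_iUnion.2 ⟨n, ih, hc⟩)

def X : Set ℝ := ⋃ n, C n

/-- Domain where the map is forced. -/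
def D : Set ℝ := {x | ∃ n j, j + 1 < h n ∧ x ∈ L n j}
/-- Range of the forced part. -/
def D' : Set ℝ := {x | ∃ n j, j + 1 < h n ∧ x ∈ L n (j + 1)}

lemma D_sub : D ⊆ X := fun _ ⟨n, j, hj, hx⟩ => Set.mem_iUnion.2 ⟨n, mem_C.2 ⟨j, by omega, hx⟩⟩
lemma D'_sub : D' ⊆ X := fun _ ⟨n, j, hj, hx⟩ => Set.mem_iUnion.2 ⟨n, mem_C.2 ⟨j + 1, hj, hx⟩⟩

lemma XD_sub : X \ D ⊆ N := by
  rintro x ⟨hx, hD⟩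
  obtain ⟨n, hn⟩ := Set.mem_iUnion.1 hx
  by_contra hN
  obtain ⟨j, hj, hxj⟩ := mem_C.1 (C_mono (Nat.le_succ n) hn hN)
  have := half (Nat.lt_succ_self n) hn hj hxj
  exact hD ⟨n + 1, j, by simp only [Nat.succ_eq_add_one] at *; omega, hxj⟩

lemma XD'_sub : X \ D' ⊆ N := by
  rintro x ⟨hx, hD⟩
  obtain ⟨n, hn⟩ := Set.mem_iUnion.1 hx
  by_contra hN
  have key : ∀ p, n ≤ p → 0 < x ∧ x < w p := by
    intro p hp
    obtain ⟨j, hj, hxj⟩ := mem_C.1 (C_mono hp hn hN)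
    obtain rfl : j = 0 := by
      by_contra hj0
      obtain ⟨j, rfl⟩ := Nat.exists_eq_succ_of_ne_zero hj0
      exact hD ⟨p, j, hj, hxj⟩
    simpa [L, pos_bot] using hxj
  have h0 := (key n le_rfl).1
  have h1 : x ≤ 0 := ge_of_tendsto w_tendsto (by
    filter_upwards [eventually_ge_atTop n] with p hp using (key p hp).2.le)
  linarith

/-- cut points at stage n -/
noncomputable def cp (n j : ℕ) : ℝ := pos n j + ((1 : ℕ) : ℝ) * w (n + 1)

lemma cp_mem (n j : ℕ) : cp n j ∈ L n j := by
  have := w_pos (n + 1)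
  have h1 : ((1 : ℕ) : ℝ) * w (n + 1) + w (n + 1) ≤ w n := sub_w (by simp [r])
  simp only [cp, L, Set.mem_Ioo]
  push_cast at *
  constructor <;> linarith

lemma cp_not {n m j : ℕ} (hj : j < h n) (hm : n < m) : cp n j ∉ C m := fun hc =>
  not_cut hj (cp_mem n j) (C_between (Nat.le_succ n) hm (mem_C.2 ⟨j, hj, cp_mem n j⟩) hc)

lemma cp_inj (f : ℕ → ℕ) (hf : ∀ n, f n < h n) : Function.Injective fun n => cp n (f n) := by
  intro m n hmn
  simp only at hmn
  by_contra hne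
  rcases lt_or_gt_of_ne hne with hl | hl
  · exact cp_not (hf m) hl (hmn ▸ mem_C.2 ⟨f n, hf n, cp_mem n (f n)⟩)
  · exact cp_not (hf n) hl (hmn ▸ mem_C.2 ⟨f m, hf m, cp_mem m (f m)⟩)

lemma XD_inf : (X \ D).Infinite := by
  have hf : ∀ n, h n - 1 < h n := fun n => by have := h_pos n; omega
  refine (Set.infinite_range_of_injective (cp_inj (fun n => h n - 1) hf)).mono ?_
  rintro _ ⟨n, rfl⟩
  have hx := cp_mem n (h n - 1)
  refine ⟨Set.mem_iUnion.2 ⟨n, mem_C.2 ⟨_, hf n, hx⟩⟩, ?_⟩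
  rintro ⟨m, j, hj, hxj⟩
  by_cases hmn : m ≤ n
  · obtain ⟨-, g, δ, h1, -, h2⟩ := coh hmn (by omega) (hf n) hxj hx
    have := (h2 (j + 1) hj).1
    omega
  · exact cp_not (hf n) (not_le.1 hmn) (mem_C.2 ⟨j, by omega, hxj⟩)

lemma XD'_inf : (X \ D').Infinite := by
  refine (Set.infinite_range_of_injective (cp_inj (fun n => 0) h_pos)).mono ?_
  rintro _ ⟨n, rfl⟩
  have hx := cp_mem n 0
  refine ⟨Set.mem_iUnion.2 ⟨n, mem_C.2 ⟨_, h_pos n, hx⟩⟩, ?_⟩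
  rintro ⟨m, j, hj, hxj⟩
  by_cases hmn : m ≤ n
  · obtain ⟨-, g, δ, h1, -, h2⟩ := coh hmn hj (h_pos n) hxj hx
    omega
  · exact cp_not (h_pos n) (not_le.1 hmn) (mem_C.2 ⟨j + 1, by omega, hxj⟩)


open Classical in
noncomputable def f (x : ℝ) : ℝ :=
  if H : ∃ q : ℕ × ℕ, q.2 + 1 < h q.1 ∧ x ∈ L q.1 q.2 then
    x + (pos (Classical.choose H).1 ((Classical.choose H).2 + 1)
      - pos (Classical.choose H).1 (Classical.choose H).2)
  else x

lemma incr_le {m n i j : ℕ} (hmn : m ≤ n) (hi : i + 1 < h m) (hj : j < h n) {x : ℝ}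
    (hx : x ∈ L m i) (hx' : x ∈ L n j) :
    pos n (j + 1) - pos n j = pos m (i + 1) - pos m i := by
  obtain ⟨-, g, δ, rfl, -, H⟩ := coh hmn (by omega) hj hx hx'
  rw [add_assoc, (H (i + 1) hi).2, (H i (by omega)).2]; ring

lemma decr_le {m n i j : ℕ} (hmn : m ≤ n) (hi : i + 1 < h m) (hj : j + 1 < h n) {x : ℝ}
    (hx : x ∈ L m (i + 1)) (hx' : x ∈ L n (j + 1)) :
    pos n (j + 1) - pos n j = pos m (i + 1) - pos m i := by
  obtain ⟨-, g, δ, h1, -, H⟩ := coh hmn hi hj hx hx'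
  obtain rfl : j = g + i := by omega
  rw [add_assoc, (H (i + 1) hi).2, (H i (by omega)).2]; ring

lemma f_eq {n j : ℕ} (hj : j + 1 < h n) {x : ℝ} (hx : x ∈ L n j) :
    f x = x + (pos n (j + 1) - pos n j) := by
  have H : ∃ q : ℕ × ℕ, q.2 + 1 < h q.1 ∧ x ∈ L q.1 q.2 := ⟨(n, j), hj, hx⟩
  rw [f, dif_pos H]
  obtain ⟨h1, h2⟩ := Classical.choose_spec H
  congr 1
  rcases le_total n (Classical.choose H).1 with hl | hl
  · exact incr_le hl hj (by omega) hx h2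
  · exact (incr_le hl h1 (by omega) h2 hx).symm

lemma L_shift {n i j : ℕ} {x : ℝ} (hx : x ∈ L n i) : x + (pos n j - pos n i) ∈ L n j := by
  simp only [L, Set.mem_Ioo] at *
  constructor <;> linarith

lemma f_bij : Set.BijOn f D D' := by
  refine ⟨?_, ?_, ?_⟩
  · rintro x ⟨n, j, hj, hx⟩
    refine ⟨n, j, hj, ?_⟩
    rw [f_eq hj hx]; exact L_shift hx
  · rintro x ⟨n, j, hj, hx⟩ y ⟨m, i, hi, hy⟩ hxy
    have h1 : f x ∈ L n (j + 1) := by rw [f_eq hj hx]; exact L_shift hx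
    have h2 : f x ∈ L m (i + 1) := by rw [hxy, f_eq hi hy]; exact L_shift hy
    have : pos n (j + 1) - pos n j = pos m (i + 1) - pos m i := by
      rcases le_total m n with hl | hl
      · exact decr_le hl hi hj h2 h1
      · exact (decr_le hl hj hi h1 h2).symm
    rw [f_eq hj hx, f_eq hi hy, this] at hxy
    linarith
  · rintro y ⟨n, j, hj, hy⟩
    have h1 : y + (pos n j - pos n (j + 1)) ∈ L n j := L_shift hy
    refine ⟨_, ⟨n, j, hj, h1⟩, ?_⟩
    rw [f_eq hj h1]; ring

lemma ex_equiv : Nonempty (↥(X \ D) ≃ ↥(X \ D')) := by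
  have := (N_countable.mono XD_sub).to_subtype
  have := (N_countable.mono XD'_sub).to_subtype
  have := XD_inf.to_subtype
  have := XD'_inf.to_subtype
  exact nonempty_equiv_of_countable

noncomputable def e : ↥(X \ D) ≃ ↥(X \ D') := Classical.choice ex_equiv

open Classical in
noncomputable def g (x : ℝ) : ℝ :=
  if x ∈ D then f x else if H : x ∈ X \ D then (e ⟨x, H⟩ : ℝ) else x

lemma g_D {x : ℝ} (hx : x ∈ D) : g x = f x := by rw [g, if_pos hx]
lemma g_XD {x : ℝ} (hx : x ∈ X \ D) : g x = e ⟨x, hx⟩ := by rw [g, if_neg hx.2, dif_pos hx]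
lemma g_X {x : ℝ} (hx : x ∉ X) : g x = x := by
  rw [g, if_neg (fun hc => hx (D_sub hc)), dif_neg (fun hc => hx hc.1)]

lemma g_bijD : Set.BijOn g D D' := f_bij.congr fun _ hx => (g_D hx).symm

lemma g_bijXD : Set.BijOn g (X \ D) (X \ D') := by
  refine ⟨fun x hx => ?_, fun x hx y hy hxy => ?_, fun y hy => ?_⟩
  · rw [g_XD hx]; exact (e ⟨x, hx⟩).2
  · rw [g_XD hx, g_XD hy] at hxy
    have := e.injective (Subtype.ext hxy)
    simpa using this
  · refine ⟨e.symm ⟨y, hy⟩, (e.symm ⟨y, hy⟩).2, ?_⟩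
    rw [g_XD (e.symm ⟨y, hy⟩).2]; simp

lemma g_bijX : Set.BijOn g X X := by
  have := g_bijD.union g_bijXD (by
    rw [Set.injOn_union Set.disjoint_sdiff_right]
    refine ⟨g_bijD.injOn, g_bijXD.injOn, fun a ha b hb hab => ?_⟩
    exact (g_bijXD.mapsTo hb).2 (hab ▸ g_bijD.mapsTo ha))
  rwa [Set.union_sdiff_cancel D_sub, Set.union_sdiff_cancel D'_sub] at this

lemma g_bij : Function.Bijective g := by
  constructor
  · intro x y hxy
    by_cases hx : x ∈ X <;> by_cases hy : y ∈ X
    · exact g_bijX.injOn hx hy hxy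
    · exact absurd (g_X hy ▸ hxy ▸ g_bijX.mapsTo hx) hy
    · exact absurd (g_X hx ▸ hxy ▸ g_bijX.mapsTo hy) hx
    · rwa [g_X hx, g_X hy] at hxy
  · intro y
    by_cases hy : y ∈ X
    · obtain ⟨x, -, hx⟩ := g_bijX.surjOn hy
      exact ⟨x, hx⟩
    · exact ⟨y, g_X hy⟩

lemma L_meas (n j : ℕ) : MeasurableSet (L n j) := measurableSet_Ioo

lemma C_meas (n : ℕ) : MeasurableSet (C n) :=
  MeasurableSet.biUnion (Set.to_countable _) fun _ _ => L_meas _ _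

lemma X_meas : MeasurableSet X := MeasurableSet.iUnion C_meas

lemma D_eq : D = ⋃ n, ⋃ j, ⋃ (_ : j + 1 < h n), L n j := by
  ext x; simp [D]

lemma D_open : IsOpen D := by
  rw [D_eq]
  exact isOpen_iUnion fun n => isOpen_iUnion fun j => isOpen_iUnion fun _ => isOpen_Ioo

lemma g_meas : Measurable g := by
  intro A hA
  have : g ⁻¹' A = (⋃ n, ⋃ j, ⋃ (_ : j + 1 < h n),
      (L n j ∩ (fun x => x + (pos n (j + 1) - pos n j)) ⁻¹' A)) ∪ ((X \ D) ∩ g ⁻¹' A) ∪ (Xᶜ ∩ A) := by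
    ext x
    simp only [Set.mem_preimage, Set.mem_union, Set.mem_iUnion, Set.mem_inter_iff, Set.mem_compl_iff]
    by_cases hx : x ∈ X
    · by_cases hD : x ∈ D
      · have hn : ¬ x ∈ X \ D := fun hc => hc.2 hD
        simp only [hn, hx, not_true, false_and, or_false]
        constructor
        · intro hg
          obtain ⟨n, j, hj, hxj⟩ := hD
          refine ⟨n, j, hj, hxj, ?_⟩
          rwa [g_D ⟨n, j, hj, hxj⟩, f_eq hj hxj] at hg
        · rintro ⟨n, j, hj, hxj, hg⟩
          rwa [g_D hD, f_eq hj hxj]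
      · have hn : x ∈ X \ D := ⟨hx, hD⟩
        simp only [hn, hx, not_true, false_and, or_false, true_and]
        constructor
        · intro hg; exact Or.inr hg
        · rintro (⟨n, j, hj, hxj, hg⟩ | hg)
          · exact absurd ⟨n, j, hj, hxj⟩ hD
          · exact hg
    · have hn : ¬ x ∈ X \ D := fun hc => hx hc.1
      simp only [hn, hx, false_and, or_false, not_false_eq_true, true_and, g_X hx]
      constructor
      · intro hg; exact Or.inr hg
      · rintro (⟨n, j, hj, hxj, hg⟩ | hg)
        · exact absurd (D_sub ⟨n, j, hj, hxj⟩) hx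
        · exact hg
  rw [this]
  refine ((MeasurableSet.iUnion fun n => MeasurableSet.iUnion fun j => MeasurableSet.iUnion fun _ =>
    (L_meas n j).inter ((measurable_add_const _) hA)).union ?_).union (X_meas.compl.inter hA)
  exact (N_countable.mono (Set.inter_subset_left.trans XD_sub)).measurableSet

noncomputable def T : ℝ ≃ᵐ ℝ where
  toEquiv := Equiv.ofBijective g g_bij
  measurable_toFun := g_meas
  measurable_invFun := by
    intro A hA
    have : (Equiv.ofBijective g g_bij).invFun ⁻¹' A = g '' A := by
      have := (Equiv.ofBijective g g_bij).image_eq_preimage_symm A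
      rw [Equiv.invFun_as_coe, ← this]; rfl
    change MeasurableSet ((Equiv.ofBijective g g_bij).invFun ⁻¹' A)
    rw [this]
    exact (g_meas.measurableEmbedding g_bij.1).measurableSet_image.2 hA

lemma T_coe : (⇑T : ℝ → ℝ) = g := rfl

lemma T_map {n j : ℕ} (hj : j + 1 < h n) {x : ℝ} (hx : x ∈ L n j) :
    T x = x + (pos n (j + 1) - pos n j) := by
  rw [T_coe, g_D ⟨n, j, hj, hx⟩, f_eq hj hx]

lemma vol_image_D {A : Set ℝ} (hA : MeasurableSet A) (hAD : A ⊆ D) : volume (g '' A) = volume A := by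
  have hd : ∀ x ∈ A, HasDerivWithinAt g 1 A x := by
    intro x hx
    obtain ⟨n, j, hj, hxj⟩ := hAD hx
    have h1 : HasDerivAt (fun y => y + (pos n (j + 1) - pos n j)) 1 x :=
      (hasDerivAt_id x).add_const _
    refine (h1.congr_of_eventuallyEq ?_).hasDerivWithinAt
    filter_upwards [isOpen_Ioo.mem_nhds hxj] with y hy
    exact T_map hj hy
  have := lintegral_image_eq_lintegral_abs_deriv_mul hA hd (g_bij.1.injOn) (fun _ => 1)
  simpa using this

lemma N_null {A : Set ℝ} (hA : A ⊆ N) : volume A = 0 := (N_countable.mono hA).measure_zero _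

lemma null_union (A : Set ℝ) {B : Set ℝ} (hB : volume B = 0) : volume (A ∪ B) = volume A :=
  le_antisymm ((measure_union_le A B).trans (by rw [hB, add_zero]))
    (measure_mono Set.subset_union_left)

lemma vol_image {A : Set ℝ} (hA : MeasurableSet A) (hAX : A ⊆ X) : volume (g '' A) = volume A := by
  have hDm : MeasurableSet D := D_open.measurableSet
  have h1 : A = (A ∩ D) ∪ (A \ D) := (Set.inter_union_sdiff A D).symm
  have h0 : (A \ D).Countable := N_countable.mono ((Set.sdiff_subset_sdiff_left hAX).trans XD_sub)
  have h2 : volume (A ∩ D) = volume A := by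
    conv_rhs => rw [h1]
    exact (null_union _ (h0.measure_zero _)).symm
  have h3 : volume (g '' A) = volume (g '' (A ∩ D)) := by
    conv_lhs => rw [h1, Set.image_union]
    exact null_union _ ((h0.image g).measure_zero _)
  rw [h3, vol_image_D (hA.inter hDm) Set.inter_subset_right, h2]

lemma T_pres : MeasurePreserving (⇑T) (volume.restrict X) (volume.restrict X) := by
  refine ⟨T.measurable, ?_⟩
  ext A hA
  rw [Measure.map_apply T.measurable hA, Measure.restrict_apply (T.measurable hA),
    Measure.restrict_apply hA, ← vol_image ((T.measurable hA).inter X_meas) Set.inter_subset_right]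
  congr 1
  rw [T_coe, Set.image_preimage_inter, g_bijX.image_eq]

noncomputable def S : RankOne where
  X := X
  T := T
  r := r
  s := s
  h := h
  w := w
  pos := pos
  hr n := by simp [r]
  h0 := rfl
  w0 := rfl
  pos0 := rfl
  hrec n := by rw [sum_hs]; rfl
  wrec n := rfl
  hX := rfl
  disj := disj
  stack n j hj k hk := by rw [sum_hs]; exact pos_stack hk hj
  Tmap n j hj x hx := T_map hj hx
  Tbij := g_bijX
  Tpres := T_pres


lemma vol_L (n j : ℕ) : volume (L n j) = ENNReal.ofReal (w n) := by
  simp [L]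

lemma vol_J (n : ℕ) (J : Finset ℕ) (hJ : ∀ j ∈ J, j < h n) :
    volume (⋃ j ∈ J, L n j) = J.card * ENNReal.ofReal (w n) := by
  rw [measure_biUnion_finset]
  · simp [vol_L]
  · intro i hi j hj hij
    exact disj n i (hJ i hi) j (hJ j hj) hij
  · intro j _; exact L_meas n j

lemma vol_C (n : ℕ) : volume (C n) = h n * ENNReal.ofReal (w n) := by
  have := vol_J n (Finset.range (h n)) (by simp)
  simpa [C] using this

lemma hw (n : ℕ) : (2 : ℝ) ^ n ≤ h n * w n := by
  induction n with
  | zero => simp [h, w]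
  | succ n ih =>
    have hr := r_pos n
    have h1 : r n + 1 ≤ 2 ^ r n := Nat.lt_two_pow_self
    have h2 : 2 * h n * r n ≤ h (n + 1) := by
      simp only [h]
      exact Nat.mul_le_mul_left _ (by omega)
    have h3 : (2 : ℝ) * h n * r n ≤ h (n + 1) := by exact_mod_cast h2
    have h4 := w_pos (n + 1)
    calc (2 : ℝ) ^ (n + 1) = 2 * 2 ^ n := by ring
      _ ≤ 2 * (h n * w n) := by linarith
      _ = 2 * h n * r n * w (n + 1) := by rw [← w_succ n]; ring
      _ ≤ _ := by gcongr

lemma vol_X : volume X = ⊤ := by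
  refine ENNReal.eq_top_of_forall_nnreal_le ?_
  intro c
  obtain ⟨n, hn⟩ := pow_unbounded_of_one_lt (c : ℝ) one_lt_two
  calc (c : ENNReal) = ENNReal.ofReal c := by simp
    _ ≤ ENNReal.ofReal (h n * w n) := ENNReal.ofReal_le_ofReal (hn.le.trans (hw n))
    _ = volume (C n) := by
      rw [vol_C, ENNReal.ofReal_mul (by positivity)]; simp
    _ ≤ volume X := measure_mono (Set.subset_iUnion C n)

lemma iter {n j : ℕ} {x : ℝ} (hx : x ∈ L n j) (k : ℕ) (hk : j + k < h n) :
    (⇑T)^[k] x ∈ L n (j + k) := by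
  induction k with
  | zero => simpa using hx
  | succ k ih =>
    have h1 := ih (by omega)
    rw [Function.iterate_succ_apply', T_map (by omega) h1]
    exact L_shift h1

lemma pair {m n k : ℕ} {x : ℝ} (hmn : m < n) (hk : 2 * k < h (n + 1))
    (hx : x ∈ C m) (hxN : x ∉ N) (hy : (⇑T)^[k] x ∈ C m) (hyN : (⇑T)^[k] x ∉ N) :
    ∃ i i' α α', i < r n ∧ i' < r n ∧ 2 * α < h n ∧ 2 * α' < h n ∧ G n i + α + k = G n i' + α' ∧
      (⇑T)^[k] x ∈ L (n + 1) (G n i' + α') ∧ (⇑T)^[k] x ∈ L n α' := by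
  have hmn1 : m ≤ n + 1 := by omega
  obtain ⟨c, hc, hxc⟩ := mem_C.1 hx
  obtain ⟨d, hd, hyd⟩ := mem_C.1 hy
  obtain ⟨t, ht, hxt⟩ := mem_C.1 (C_mono hmn1 hx hxN)
  obtain ⟨t', ht', hyt⟩ := mem_C.1 (C_mono hmn1 hy hyN)
  obtain ⟨i, α, hi, hα, rfl, hxα⟩ := L_dec ht hxt hmn.le hc hxc
  obtain ⟨i', α', hi', hα', rfl, hyα⟩ := L_dec ht' hyt hmn.le hd hyd
  have h1 := half hmn hx hα hxα
  have h2 := half hmn hy hα' hyα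
  have h3 := G_lt hi hα
  have h4 := iter hxt k (by omega)
  have h5 := L_unique (by omega) ht' h4 hyt
  exact ⟨i, i', α, α', hi, hi', by omega, by omega, h5, hyt, hyα⟩

lemma uniq {n k i i' α α' p p' β β' : ℕ} (hk : h n ≤ 2 * k)
    (h1 : 2 * α < h n) (h2 : 2 * α' < h n) (h3 : 2 * β < h n) (h4 : 2 * β' < h n)
    (e1 : G n i + α + k = G n i' + α') (e2 : G n p + β + k = G n p' + β') : i' = p' := by
  have g1 := G_add n i
  have g2 := G_add n i'
  have g3 := G_add n p
  have g4 := G_add n p'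
  have hh := h_pos n
  have lt1 : 2 ^ i < 2 ^ i' := by
    have : 2 * h n * 2 ^ i < 2 * h n * 2 ^ i' := by omega
    exact lt_of_mul_lt_mul_left this (by omega)
  have lt2 : 2 ^ p < 2 ^ p' := by
    have : 2 * h n * 2 ^ p < 2 * h n * 2 ^ p' := by omega
    exact lt_of_mul_lt_mul_left this (by omega)
  have a1 : 2 ^ i' + 2 ^ p < 2 ^ p' + 2 ^ i + 1 := by
    have : 2 * h n * (2 ^ i' + 2 ^ p) < 2 * h n * (2 ^ p' + 2 ^ i + 1) := by
      simp only [mul_add]; omega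
    exact lt_of_mul_lt_mul_left this (by omega)
  have a2 : 2 ^ p' + 2 ^ i < 2 ^ i' + 2 ^ p + 1 := by
    have : 2 * h n * (2 ^ p' + 2 ^ i) < 2 * h n * (2 ^ i' + 2 ^ p + 1) := by
      simp only [mul_add]; omega
    exact lt_of_mul_lt_mul_left this (by omega)
  have b1 : 2 * 2 ^ i ≤ 2 ^ i' := by
    rw [← pow_succ']
    exact Nat.pow_le_pow_right (by norm_num) ((Nat.pow_lt_pow_iff_right (by norm_num)).1 lt1)
  have b2 : 2 * 2 ^ p ≤ 2 ^ p' := by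
    rw [← pow_succ']
    exact Nat.pow_le_pow_right (by norm_num) ((Nat.pow_lt_pow_iff_right (by norm_num)).1 lt2)
  have q1 : 0 < 2 ^ i := by positivity
  have q2 : 0 < 2 ^ p := by positivity
  by_contra hne
  rcases lt_or_gt_of_ne hne with hl | hl
  · have : 2 * 2 ^ i' ≤ 2 ^ p' := by
      rw [← pow_succ']; exact Nat.pow_le_pow_right (by norm_num) hl
    omega
  · have : 2 * 2 ^ p' ≤ 2 ^ i' := by
      rw [← pow_succ']; exact Nat.pow_le_pow_right (by norm_num) hl
    omega

open Classical in
lemma col_bound {m n k : ℕ} (hmn : m < n) (hk : h n ≤ 2 * k) (hk' : 2 * k < h (n + 1)) :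
    (r n : ENNReal) * volume (C m ∩ (⇑T)^[k] '' C m) ≤ volume (C m) := by
  set J : Finset ℕ := (Finset.range (h n)).filter fun j => L n j ⊆ C m with hJ
  have claim : ∃ i', C m ∩ (⇑T)^[k] '' C m ⊆
      (⋃ j ∈ J, L (n + 1) (G n i' + j)) ∪ (N ∪ (⇑T)^[k] '' N) := by
    by_cases hP : ∃ x, x ∈ C m ∧ x ∉ N ∧ (⇑T)^[k] x ∈ C m ∧ (⇑T)^[k] x ∉ N
    · obtain ⟨x₀, hx₀, hxN₀, hy₀, hyN₀⟩ := hP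
      obtain ⟨p, p', β, β', -, -, h3, h4, e2, -, -⟩ := pair hmn hk' hx₀ hxN₀ hy₀ hyN₀
      refine ⟨p', ?_⟩
      rintro _ ⟨hy, x, hx, rfl⟩
      by_cases hxN : x ∈ N
      · exact Or.inr (Or.inr ⟨x, hxN, rfl⟩)
      by_cases hyN : (⇑T)^[k] x ∈ N
      · exact Or.inr (Or.inl hyN)
      obtain ⟨i, i', α, α', -, -, h1, h2, e1, hL, hL'⟩ := pair hmn hk' hx hxN hy hyN
      obtain rfl := uniq hk h1 h2 h3 h4 e1 e2
      refine Or.inl (Set.mem_iUnion₂.2 ⟨α', ?_, hL⟩)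
      obtain ⟨c, hc, hyc⟩ := mem_C.1 hy
      have hα : α' < h n := by omega
      simp only [hJ, Finset.mem_filter, Finset.mem_range]
      exact ⟨hα, fun z hz => mem_C.2 ⟨c, hc, (coh hmn.le hc hα hyc hL').1 hz⟩⟩
    · refine ⟨0, ?_⟩
      push Not at hP
      rintro _ ⟨hy, x, hx, rfl⟩
      by_cases hxN : x ∈ N
      · exact Or.inr (Or.inr ⟨x, hxN, rfl⟩)
      · exact Or.inr (Or.inl (hP x hx hxN hy))
  obtain ⟨i', hi'⟩ := claim
  have h0 : volume (N ∪ (⇑T)^[k] '' N) = 0 :=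
    (N_countable.union (N_countable.image _)).measure_zero _
  have h1 : volume (C m ∩ (⇑T)^[k] '' C m) ≤ J.card * ENNReal.ofReal (w (n + 1)) := by
    refine (measure_mono hi').trans ?_
    rw [null_union _ h0]
    refine (measure_biUnion_finset_le _ _).trans ?_
    simp [vol_L]
  calc (r n : ENNReal) * volume (C m ∩ (⇑T)^[k] '' C m)
      ≤ r n * (J.card * ENNReal.ofReal (w (n + 1))) := by gcongr
    _ = J.card * ENNReal.ofReal (w n) := by
      rw [← w_succ n, ENNReal.ofReal_mul (r_pos n).le, ENNReal.ofReal_natCast]; ring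
    _ = volume (⋃ j ∈ J, L n j) := by
      rw [vol_J]; intro j hj; simp only [hJ, Finset.mem_filter, Finset.mem_range] at hj; exact hj.1
    _ ≤ volume (C m) := by
      refine measure_mono (Set.iUnion₂_subset fun j hj => ?_)
      simp only [hJ, Finset.mem_filter] at hj; exact hj.2

lemma h_mono : Monotone h := monotone_nat_of_le_succ fun n => by have := h_lt n; omega

lemma find_n (R k : ℕ) (hk : h R ≤ 2 * k) : ∃ n, R ≤ n ∧ h n ≤ 2 * k ∧ 2 * k < h (n + 1) := by
  have hex : ∃ n, 2 * k < h (n + 1) := ⟨2 * k, by have := le_h (2 * k + 1); omega⟩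
  classical
  refine ⟨Nat.find hex, ?_, ?_, Nat.find_spec hex⟩
  · by_contra hc
    have h1 := Nat.find_spec hex
    have h2 := h_mono (show Nat.find hex + 1 ≤ R by omega)
    omega
  · rcases Nat.eq_zero_or_pos (Nat.find hex) with h0 | h0
    · rw [h0]; exact (h_mono (Nat.zero_le R)).trans hk
    · have := Nat.find_min hex (m := Nat.find hex - 1) (by omega)
      rw [Nat.sub_add_cancel h0] at this
      omega

lemma vol_C_ne_top (n : ℕ) : volume (C n) ≠ ⊤ := by
  rw [vol_C]; exact ENNReal.mul_ne_top (by simp) (by simp)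

lemma C_zero (m : ℕ) : Tendsto (fun k => volume (C m ∩ (⇑T)^[k] '' C m)) atTop (nhds 0) := by
  rw [ENNReal.tendsto_nhds_zero]
  intro ε hε
  obtain ⟨R, hR⟩ := ENNReal.exists_nat_mul_gt hε.ne' (vol_C_ne_top m)
  filter_upwards [eventually_ge_atTop (h (R + m + 1))] with k hk
  obtain ⟨n, hn, h1, h2⟩ := find_n (R + m + 1) k (by omega)
  have h3 := col_bound (m := m) (by omega) h1 h2
  by_contra hc
  push Not at hc
  have : (R : ENNReal) * ε ≤ r n * volume (C m ∩ (⇑T)^[k] '' C m) := by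
    gcongr
    simp only [r]; omega
  exact absurd (this.trans h3) (not_le.2 hR)

lemma emb (k : ℕ) : MeasurableEmbedding ((⇑T)^[k]) := by
  induction k with
  | zero => exact MeasurableEmbedding.id
  | succ k ih => rw [Function.iterate_succ]; exact ih.comp T.measurableEmbedding

noncomputable abbrev ν : Measure ℝ := volume.restrict X

lemma ν_image (k : ℕ) (A : Set ℝ) : ν ((⇑T)^[k] '' A) = ν A := by
  rw [← (T_pres.iterate k).measure_preimage_emb (emb k), Set.preimage_image_eq _ (emb k).injective]

lemma ν_null {A : Set ℝ} (hA : A.Countable) : ν A = 0 := hA.measure_zero _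

lemma ν_compl : ν Xᶜ = 0 := by
  rw [Measure.restrict_apply X_meas.compl]; simp

lemma zeroType : S.ZeroType := by
  intro A hA hfin
  change ν A ≠ ⊤ at hfin
  change Tendsto (fun k => ν (A ∩ (⇑T)^[k] '' A)) atTop (nhds 0)
  have hN : MeasurableSet N := N_countable.measurableSet
  have lim : Tendsto (fun m => ν (A \ (C m \ N))) atTop (nhds 0) := by
    have h1 : ν (⋂ m, A \ (C m \ N)) = 0 := by
      refine measure_mono_null (t := Xᶜ ∪ N) ?_ (measure_union_null ν_compl (ν_null N_countable))
      intro x hx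
      by_contra hc
      simp only [Set.mem_union, Set.mem_compl_iff, not_or, not_not] at hc
      obtain ⟨m, hm⟩ := Set.mem_iUnion.1 hc.1
      exact (Set.mem_iInter.1 hx m).2 ⟨hm, hc.2⟩
    rw [← h1]
    refine tendsto_measure_iInter_atTop
      (fun m => (hA.diff ((C_meas m).diff hN)).nullMeasurableSet) ?_
      ⟨0, ne_top_of_le_ne_top hfin (measure_mono Set.sdiff_subset)⟩
    intro m n hmn x hx
    exact ⟨hx.1, fun hc => hx.2 ⟨C_mono hmn hc.1 hc.2, hc.2⟩⟩
  rw [ENNReal.tendsto_nhds_zero] at lim ⊢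
  intro ε hε
  have hε3 : 0 < ε / 3 := ENNReal.div_pos hε.ne' (by simp)
  obtain ⟨m, hm⟩ := (lim (ε / 3) hε3).exists
  have hz := C_zero m
  rw [ENNReal.tendsto_nhds_zero] at hz
  filter_upwards [hz (ε / 3) hε3] with k hk
  set B := A \ (C m \ N) with hB
  have hsub : A ∩ (⇑T)^[k] '' A ⊆ B ∪ (⇑T)^[k] '' B ∪ (C m ∩ (⇑T)^[k] '' C m) := by
    rintro _ ⟨hy, x, hx, rfl⟩
    by_cases h1 : (⇑T)^[k] x ∈ B
    · exact Or.inl (Or.inl h1)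
    by_cases h2 : x ∈ B
    · exact Or.inl (Or.inr ⟨x, h2, rfl⟩)
    have h3 : (⇑T)^[k] x ∈ C m := by
      by_contra hc; exact h1 ⟨hy, fun h => hc h.1⟩
    have h4 : x ∈ C m := by
      by_contra hc; exact h2 ⟨hx, fun h => hc h.1⟩
    exact Or.inr ⟨h3, x, h4, rfl⟩
  calc ν (A ∩ (⇑T)^[k] '' A) ≤ ν B + ν ((⇑T)^[k] '' B) + ν (C m ∩ (⇑T)^[k] '' C m) :=
        (measure_mono hsub).trans ((measure_union_le _ _).trans (by gcongr; exact measure_union_le _ _))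
    _ ≤ ε / 3 + ε / 3 + ε / 3 := by
        rw [ν_image]
        gcongr
        exact (Measure.restrict_apply_le _ _).trans hk
    _ = ε := ENNReal.add_thirds ε

lemma cong {n a b k : ℕ} {x : ℝ} (ha : a < h n) (hb : b < h n) (hx : x ∈ L n a) (hN : x ∉ N)
    (hy : (⇑T)^[k] x ∈ L n b) : a + k ≡ b [MOD h n] := by
  have hxC : x ∈ C n := mem_C.2 ⟨a, ha, hx⟩
  set p := n + 2 * k + 1 with hp
  obtain ⟨j, hj, hxj⟩ := mem_C.1 (C_mono (show n ≤ p by omega) hxC hN)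
  have h1 := half (by omega) hxC hj hxj
  have h2 := le_h p
  have hjk : j + k < h p := by omega
  have h3 := iter hxj k hjk
  obtain ⟨-, g, -, rfl, hg, -⟩ := coh (show n ≤ p by omega) ha hj hx hxj
  obtain ⟨-, g', -, e, hg', -⟩ := coh (show n ≤ p by omega) hb hjk hy h3
  obtain ⟨c, rfl⟩ := hg
  obtain ⟨d, rfl⟩ := hg'
  have e1 : (a + k) % h n = (h n * c + a + k) % h n := by
    rw [add_assoc, Nat.mul_add_mod]
  rw [Nat.ModEq, e1, e, Nat.mul_add_mod]

lemma null_of {n a b k : ℕ} {A B : Set ℝ} (ha : a < h n) (hb : b < h n) (hA : A ⊆ L n a)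
    (hB : B ⊆ L n b) (hk : ¬ b + k ≡ a [MOD h n]) : ν (A ∩ (⇑T)^[k] '' B) = 0 := by
  refine measure_mono_null (t := (⇑T)^[k] '' N) ?_ (ν_null (N_countable.image _))
  rintro _ ⟨hy, x, hx, rfl⟩
  by_contra hc
  have hN : x ∉ N := fun h => hc ⟨x, h, rfl⟩
  exact hk (cong hb ha (hB hx) hN (hA hy))

lemma sep {F : Set ℝ} (hF : ν F ≠ 0) : ∃ n a b, a < h n ∧ b < h n ∧ a ≠ b ∧
    ν (F ∩ L n a) ≠ 0 ∧ ν (F ∩ L n b) ≠ 0 := by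
  by_contra hc
  push Not at hc
  have bd : ∀ n, ν (F ∩ C n) ≤ ENNReal.ofReal (w n) := by
    intro n
    by_cases H : ∃ a, a < h n ∧ ν (F ∩ L n a) ≠ 0
    · obtain ⟨a, ha, hFa⟩ := H
      have : F ∩ C n ⊆ L n a ∪ ⋃ b ∈ {b | b < h n ∧ a ≠ b}, F ∩ L n b := by
        rintro x ⟨hx, hxC⟩
        obtain ⟨b, hb, hxb⟩ := mem_C.1 hxC
        by_cases hab : a = b
        · subst hab; exact Or.inl hxb
        · exact Or.inr (Set.mem_iUnion₂.2 ⟨b, ⟨hb, hab⟩, hx, hxb⟩)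
      refine (measure_mono this).trans ((measure_union_le _ _).trans ?_)
      rw [(measure_biUnion_null_iff (Set.to_countable _)).2, add_zero]
      · exact (Measure.restrict_apply_le _ _).trans (vol_L n a).le
      · rintro b ⟨hb, hab⟩
        exact hc n a b ha hb hab hFa
    · push Not at H
      have : F ∩ C n = ⋃ b ∈ {b | b < h n}, F ∩ L n b := by
        ext x; simp [C]
      rw [this, (measure_biUnion_null_iff (Set.to_countable _)).2]
      · exact zero_le
      · intro b hb; exact H b hb
  have z : ∀ m, ν (F ∩ C m) = 0 := by
    intro m
    have lim : Tendsto (fun n => ENNReal.ofReal (w n)) atTop (nhds 0) := by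
      simpa using ENNReal.tendsto_ofReal w_tendsto
    refine le_antisymm (ge_of_tendsto lim ?_) zero_le
    filter_upwards [eventually_ge_atTop m] with n hn
    refine le_trans ?_ (bd n)
    have : F ∩ C m ⊆ (F ∩ C n) ∪ N := by
      rintro x ⟨hx, hxC⟩
      by_cases hN : x ∈ N
      · exact Or.inr hN
      · exact Or.inl ⟨hx, C_mono hn hxC hN⟩
    refine (measure_mono this).trans ((measure_union_le _ _).trans ?_)
    rw [ν_null N_countable, add_zero]
  apply hF
  refine measure_mono_null (t := (⋃ m, F ∩ C m) ∪ Xᶜ) ?_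
    (measure_union_null (measure_iUnion_null z) ν_compl)
  intro x hx
  by_cases hxX : x ∈ X
  · obtain ⟨m, hm⟩ := Set.mem_iUnion.1 hxX
    exact Or.inl (Set.mem_iUnion.2 ⟨m, hx, hm⟩)
  · exact Or.inr hxX

lemma notRWM : ¬ S.RWM := by
  rintro ⟨F, hFm, hF0, hFt, H⟩
  change 0 < ν F at hF0
  change ν F ≠ ⊤ at hFt
  obtain ⟨n, a, b, ha, hb, hab, hA, hB⟩ := sep hF0.ne'
  set A := F ∩ L n a with hAdef
  set B := F ∩ L n b with hBdef
  have hAm : MeasurableSet A := hFm.inter (L_meas n a)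
  have hBm : MeasurableSet B := hFm.inter (L_meas n b)
  have hAF : A ⊆ F := Set.inter_subset_left
  have hBF : B ⊆ F := Set.inter_subset_left
  have H1 := H A A hAm hAF hAm hAF
  have H2 := H A B hAm hAF hBm hBF
  have H3 := H1.add H2
  have pA : 0 < (S.μ A).toReal :=
    ENNReal.toReal_pos hA (ne_top_of_le_ne_top hFt (measure_mono hAF))
  have pB : 0 < (S.μ B).toReal :=
    ENNReal.toReal_pos hB (ne_top_of_le_ne_top hFt (measure_mono hBF))
  have pF : 0 < (S.μ F).toReal := ENNReal.toReal_pos hF0.ne' hFt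
  set x := (S.μ A).toReal
  set y := (S.μ B).toReal
  set c := min (x * x) (x * y) with hc
  have hcpos : 0 < c := lt_min (by positivity) (by positivity)
  have hu : ∀ k, 0 ≤ S.u F k := fun k => by unfold RankOne.u; positivity
  have hu0 : 0 < S.u F 0 := by
    unfold RankOne.u
    simp only [Function.iterate_zero, Set.image_id, Set.inter_self]
    positivity
  have key : ∀ k, c * S.u F k ≤
      |(S.μ (A ∩ (⇑S.T)^[k] '' A)).toReal - x * x * S.u F k| +
      |(S.μ (A ∩ (⇑S.T)^[k] '' B)).toReal - x * y * S.u F k| := by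
    intro k
    have hk := hu k
    by_cases hd : a + k ≡ a [MOD h n]
    · have hnd : ¬ b + k ≡ a [MOD h n] := by
        intro hc
        have h1 : a ≡ b [MOD h n] := Nat.ModEq.add_right_cancel' k (hd.trans hc.symm)
        exact hab (Nat.ModEq.eq_of_lt_of_lt h1 ha hb)
      have : S.μ (A ∩ (⇑S.T)^[k] '' B) = 0 :=
        null_of ha hb Set.inter_subset_right Set.inter_subset_right hnd
      rw [this]
      have h2 : c * S.u F k ≤ x * y * S.u F k := by gcongr; exact min_le_right _ _
      have h3 : |(0 : ENNReal).toReal - x * y * S.u F k| = x * y * S.u F k := by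
        rw [ENNReal.toReal_zero, zero_sub, abs_neg, abs_of_nonneg (by positivity)]
      rw [h3]
      have := abs_nonneg ((S.μ (A ∩ (⇑S.T)^[k] '' A)).toReal - x * x * S.u F k)
      linarith
    · have : S.μ (A ∩ (⇑S.T)^[k] '' A) = 0 :=
        null_of ha ha Set.inter_subset_right Set.inter_subset_right hd
      rw [this]
      have h2 : c * S.u F k ≤ x * x * S.u F k := by gcongr; exact min_le_left _ _
      have h3 : |(0 : ENNReal).toReal - x * x * S.u F k| = x * x * S.u F k := by
        rw [ENNReal.toReal_zero, zero_sub, abs_neg, abs_of_nonneg (by positivity)]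
      rw [h3]
      have := abs_nonneg ((S.μ (A ∩ (⇑S.T)^[k] '' B)).toReal - x * y * S.u F k)
      linarith
  have hle : c ≤ 0 + 0 := by
    refine ge_of_tendsto H3 ?_
    filter_upwards [eventually_ge_atTop 1] with m hm
    have hapos : 0 < S.a F m := by
      unfold RankOne.a
      exact Finset.sum_pos' (fun k _ => hu k) ⟨0, Finset.mem_range.2 hm, hu0⟩
    rw [← mul_add, ← Finset.sum_add_distrib, ← div_eq_inv_mul, le_div_iff₀ hapos]
    unfold RankOne.a
    rw [Finset.mul_sum]
    exact Finset.sum_le_sum fun k _ => key k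
  linarith

end R1

/-- There exists a rank-one transformation of an infinite σ-finite
nonatomic measure space which is zero-type but not rationally weakly mixing. -/
theorem statement17 :
    ∃ S : RankOne, volume S.X = ⊤ ∧ S.ZeroType ∧ ¬ S.RWM := by
  exact ⟨R1.S, R1.vol_X, R1.zeroType, R1.notRWM⟩
end
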